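/- arXiv:math/9906141 — 2 statements merged into one kernel-verified Lean document; each statement's English description precedes it below -/
import Mathlib

section
/- For a unital ring R, the right R-module R has the finite exchange property if and only if for every element a ∈ R there exists an idempotent e ∈ R such that e ∈ aR and 1 − e ∈ (1 − a)R. -/
universe u

/-- A right `R`-module `M` (= `Rᵐᵒᵖ`-module) has the *finite exchange property* if for
every right `R`-module `A` and internal direct sum decompositions
`A = M' ⊕ N = A₁ ⊕ ⋯ ⊕ Aₙ` with `M' ≅ M`, there are submodules `A'ᵢ ≤ Aᵢ` with
`A = M' ⊕ A'₁ ⊕ ⋯ ⊕ A'ₙ`.  Internal direct sums are expressed by independence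
(`iSupIndep`) together with supremum `⊤`. -/
def HasFiniteExchangeProperty (R : Type u) [Ring R] (M : Type u) [AddCommGroup M]
    [Module Rᵐᵒᵖ M] : Prop :=
  ∀ (A : Type u) [AddCommGroup A] [Module Rᵐᵒᵖ A]
    (M' N : Submodule Rᵐᵒᵖ A) (n : ℕ) (P : Fin n → Submodule Rᵐᵒᵖ A),
    Nonempty (M ≃ₗ[Rᵐᵒᵖ] M') → IsCompl M' N →
    iSupIndep P → (⨆ i, P i) = ⊤ →
    ∃ P' : Fin n → Submodule Rᵐᵒᵖ A,
      (∀ i, P' i ≤ P i) ∧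
      iSupIndep (fun o : Option (Fin n) => o.elim M' P') ∧
      (⨆ o : Option (Fin n), o.elim M' P') = ⊤

/-!
A complement `A'₁ ⊕ ⋯ ⊕ A'ₙ` of the image of `f : M → A` with `A'ᵢ ≤ Aᵢ` amounts to a retraction
of `f` whose kernel is stable under the projections `εᵢ` of `A = A₁ ⊕ ⋯ ⊕ Aₙ`. For `A = M ⊕ M` and
`f = (a, 1 - a)`, the components `(r, s)` of such a retraction give the idempotent `ra` with `1 -
ra = s(1 - a)`, and suitability is left-right symmetric. Conversely, let `g` be a retraction of
`f`, so that the endomorphisms `aᵢ = gεᵢf` of `M` have sum `1`. If every endomorphism of `M` is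
suitable, idempotents can be split off one at a time to find `rᵢ` for which the `eᵢ = rᵢaᵢ` are
complete orthogonal idempotents, and then `∑ eᵢrᵢgεᵢ` is the required retraction. For `M = R` the
endomorphism ring is `R` itself.
-/

/-- Right suitability in the sense of Nicholson: some idempotent lies in `aS` while its complement
lies in `(1 - a)S`.  Exchange rings are the rings all of whose elements are suitable. -/
def IsSuitable {S : Type*} [Ring S] (a : S) : Prop :=
  ∃ e r s : S, IsIdempotentElem e ∧ e = a * r ∧ 1 - e = (1 - a) * s

section Suitable

variable {S : Type*} [Ring S]

theorem IsSuitable.map {T : Type*} [Ring T] (φ : S →+* T) {a : S} (h : IsSuitable a) :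
    IsSuitable (φ a) := by
  obtain ⟨e, r, s, he, hr, hs⟩ := h
  exact ⟨φ e, φ r, φ s, he.map φ, by rw [hr, map_mul],
    by rw [← map_one φ, ← map_sub, hs, map_mul, map_sub]⟩

theorem isSuitable_map_iff {T : Type*} [Ring T] (φ : S ≃+* T) {a : S} :
    IsSuitable (φ a) ↔ IsSuitable a :=
  ⟨fun h ↦ by simpa using h.map (φ.symm : T →+* S), fun h ↦ h.map (φ : S →+* T)⟩

theorem isSuitable_of_left {a e r s : S} (he : IsIdempotentElem e)
    (hr : e = r * a) (hs : 1 - e = s * (1 - a)) : IsSuitable a := by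
  wlog h : e * r = r ∧ (1 - e) * s = s generalizing r s
  · refine this (r := e * r) (s := (1 - e) * s) ?_ ?_ ⟨?_, ?_⟩
    · rw [mul_assoc, ← hr, he.eq]
    · rw [mul_assoc, ← hs, he.one_sub.eq]
    · rw [← mul_assoc, he.eq]
    · rw [← mul_assoc, he.one_sub.eq]
  obtain ⟨her, hes⟩ := h
  obtain ⟨u, hu⟩ : ∃ u, u = r - s := ⟨_, rfl⟩
  have hua : u * a = 1 - s := by
    have hsa : s * a = s - (1 - e) := by rw [hs]; noncomm_ring
    rw [hu, sub_mul, ← hr, hsa]; abel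
  have huaa : u * a * (1 - a) = e - a := by
    rw [hua, sub_mul, one_mul, ← hs]; abel
  have heu : e * u = r := by
    rw [hu, mul_sub, her, ← hes, ← mul_assoc, he.mul_one_sub_self, zero_mul, sub_zero]
  -- This quadratic equation in `u` is what makes `a(1 + (1 - a)u)` idempotent.
  have hquad : 1 + u - u * a - a * u - u * a * (1 - a) * u = 0 := by
    rw [huaa, sub_mul, heu, hua]
    have hsr : s = r - u := by rw [hu, sub_sub_cancel]
    rw [hsr]; abel
  refine ⟨a * (1 + (1 - a) * u), 1 + (1 - a) * u, 1 - a * u, ?_, rfl, by noncomm_ring⟩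
  rw [IsIdempotentElem, eq_comm, ← sub_eq_zero]
  calc a * (1 + (1 - a) * u) - a * (1 + (1 - a) * u) * (a * (1 + (1 - a) * u))
      = a * (1 - a) * (1 + u - u * a - a * u - u * a * (1 - a) * u) := by noncomm_ring
    _ = 0 := by rw [hquad, mul_zero]

theorem isSuitable_op_iff_exists_left {a : S} :
    IsSuitable (MulOpposite.op a) ↔
      ∃ e r s : S, IsIdempotentElem e ∧ e = r * a ∧ 1 - e = s * (1 - a) := by
  simp only [IsSuitable, IsIdempotentElem, MulOpposite.exists, ← MulOpposite.op_mul,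
    ← MulOpposite.op_one, ← MulOpposite.op_sub, MulOpposite.op_inj]

theorem IsSuitable.of_op {a : S} (h : IsSuitable (MulOpposite.op a)) : IsSuitable a := by
  obtain ⟨e, r, s, he, hr, hs⟩ := isSuitable_op_iff_exists_left.1 h
  exact isSuitable_of_left he hr hs

theorem isSuitable_op {a : S} : IsSuitable (MulOpposite.op a) ↔ IsSuitable a :=
  ⟨.of_op, fun h ↦ .of_op ((isSuitable_map_iff (RingEquiv.opOp S)).2 h)⟩

theorem isSuitable_iff_exists_left {a : S} :
    IsSuitable a ↔ ∃ e r s : S, IsIdempotentElem e ∧ e = r * a ∧ 1 - e = s * (1 - a) :=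
  isSuitable_op.symm.trans isSuitable_op_iff_exists_left

-- Adding `1 - g` to `x` turns the complement into `g - x`, which lies in `Sg`; this is what lets
-- the idempotent be cut down to the corner `gSg`.
theorem IsSuitable.exists_isIdempotentElem_corner {g x : S} (h : IsSuitable (x + (1 - g)))
    (hg : IsIdempotentElem g) (hxg : x * g = x) :
    ∃ e p q : S, IsIdempotentElem e ∧ g * e = e ∧ e * g = e ∧ e = p * x ∧
      g - e = q * (g - x) := by
  obtain ⟨k, p, q, hk, hp, hq⟩ := isSuitable_iff_exists_left.1 h
  replace hq : 1 - k = q * (g - x) := by rw [hq]; congr 1; abel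
  have hkg : (1 - k) * g = 1 - k := by rw [hq, mul_assoc, sub_mul, hg.eq, hxg]
  have hidem : IsIdempotentElem (g * (1 - k)) := by
    rw [IsIdempotentElem, mul_assoc, ← mul_assoc (1 - k), hkg, hk.one_sub.eq]
  have hleft : g * (g * (1 - k)) = g * (1 - k) := by rw [← mul_assoc, hg.eq]
  have hright : g * (1 - k) * g = g * (1 - k) := by rw [mul_assoc, hkg]
  have hgkg : g - g * (1 - k) = g * k * g := by
    rw [← hright, mul_sub, mul_one, sub_mul, hg.eq, sub_sub_cancel]
  refine ⟨g - g * (1 - k), g * p, g * q, hidem.sub hg hright hleft, ?_, ?_, ?_, ?_⟩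
  · rw [mul_sub, hg.eq, hleft]
  · rw [sub_mul, hg.eq, hright]
  · rw [hgkg, hp, mul_assoc, mul_assoc, add_mul, hxg, hg.one_sub_mul_self, add_zero, mul_assoc]
  · rw [sub_sub_cancel, hq, mul_assoc]

theorem orthogonalIdempotents_cons {n : ℕ} {w : Fin n → S} (hw : OrthogonalIdempotents w) {v : S}
    (hv : IsIdempotentElem v) (hvw : v * ∑ i, w i = 0) :
    OrthogonalIdempotents (Fin.cons ((1 - ∑ i, w i) * v) w : Fin (n + 1) → S) := by
  have hW : IsIdempotentElem (∑ i, w i) := hw.isIdempotentElem_sum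
  have hoption : OrthogonalIdempotents (Option.elim · ((1 - ∑ i, w i) * v) w) := by
    refine hw.option _ ?_ ?_ ?_
    · rw [IsIdempotentElem, mul_assoc, ← mul_assoc v, mul_sub, hvw, sub_zero, mul_one, hv.eq]
    · rw [mul_assoc, hvw, mul_zero]
    · rw [← mul_assoc, hW.mul_one_sub_self, zero_mul]
  convert (OrthogonalIdempotents.equiv (finSuccEquiv n)).2 hoption using 1
  ext i
  cases i using Fin.cases <;> simp

/-- An internal decomposition `hS = ⨁ wᵢS` of the right ideal of an idempotent `h` by orthogonal
idempotents.  The sum of the `wᵢ` need not be `h`: it is only required to generate `hS`. -/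
structure DecomposesIdempotent {n : ℕ} (w : Fin n → S) (h : S) : Prop
    extends OrthogonalIdempotents w where
  mul_sum : h * ∑ i, w i = ∑ i, w i
  sum_mul : (∑ i, w i) * h = h

theorem DecomposesIdempotent.cons {n : ℕ} {w : Fin n → S} {h e v : S}
    (hw : DecomposesIdempotent w (h - e)) (hh : IsIdempotentElem h) (he : IsIdempotentElem e)
    (hhe : h * e = e) (heh : e * h = e) (hev : e * v = v) (hvh : v * h = e) :
    DecomposesIdempotent (Fin.cons ((1 - ∑ i, w i) * v) w : Fin (n + 1) → S) h := by
  have hhv : h * v = v := by rw [← hev, ← mul_assoc, hhe]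
  have hv : IsIdempotentElem v := by
    calc v * v = v * (h * v) := by rw [hhv]
      _ = v := by rw [← mul_assoc, hvh, hev]
  have hhf : h * (h - e) = h - e := by rw [mul_sub, hh.eq, hhe]
  have hhW : h * ∑ i, w i = ∑ i, w i := by rw [← hw.mul_sum, ← mul_assoc, hhf]
  have hvW : v * ∑ i, w i = 0 := by
    calc v * ∑ i, w i = v * h * (h - e) * ∑ i, w i := by
          rw [mul_assoc, hw.mul_sum, mul_assoc, hhW]
      _ = 0 := by rw [hvh, mul_sub, heh, he.eq, sub_self, zero_mul]
  refine ⟨orthogonalIdempotents_cons hw.toOrthogonalIdempotents hv hvW, ?_, ?_⟩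
  · simp only [Fin.sum_cons, mul_add, sub_mul, one_mul, mul_sub, hhv, ← mul_assoc, hhW]
  · have hWh : (∑ i, w i) * h = h - e + (∑ i, w i) * e := by
      rw [← hw.sum_mul, mul_sub, sub_add_cancel]
    rw [Fin.sum_cons, add_mul, mul_assoc, hvh, hWh, sub_mul, one_mul]
    abel

theorem exists_decomposesIdempotent (hS : ∀ x : S, IsSuitable x) {n : ℕ} {h : S}
    (hh : IsIdempotentElem h) {a : Fin n → S} (ha : (∑ i, a i) * h = h) :
    ∃ r : Fin n → S, DecomposesIdempotent (fun i ↦ r i * a i) h := by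
  induction n generalizing h with
  | zero =>
    have hzero : h = 0 := by simpa using ha.symm
    exact ⟨0, ⟨fun i ↦ i.elim0, fun i ↦ i.elim0⟩, by simp, by simp [hzero]⟩
  | succ n ih =>
    obtain ⟨e, p, q, he, hhe, heh, hep, heq⟩ :=
      (hS (a 0 * h + (1 - h))).exists_isIdempotentElem_corner hh (by rw [mul_assoc, hh.eq])
    have hf : IsIdempotentElem (h - e) := he.sub hh heh hhe
    have hhf : h * (h - e) = h - e := by rw [mul_sub, hh.eq, hhe]
    have htail : (∑ i : Fin n, q * a i.succ) * (h - e) = h - e := by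
      rw [Fin.sum_univ_succ, add_mul] at ha
      calc (∑ i : Fin n, q * a i.succ) * (h - e)
          = q * ((∑ i : Fin n, a i.succ) * h) * (h - e) := by
            rw [← Finset.mul_sum, ← mul_assoc, mul_assoc _ h, hhf]
        _ = h - e := by rw [eq_sub_of_add_eq' ha, ← heq, hf.eq]
    obtain ⟨r, hw⟩ := ih hf htail
    refine ⟨Fin.cons ((1 - ∑ i, r i * (q * a i.succ)) * (e * p)) fun i ↦ r i * q, ?_⟩
    convert hw.cons hh he hhe heh (v := e * p * a 0) ?_ ?_ using 1
    · ext i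
      cases i using Fin.cases <;> simp [mul_assoc]
    · rw [← mul_assoc, ← mul_assoc, he.eq]
    · rw [mul_assoc, mul_assoc, ← hep, he.eq]

theorem exists_completeOrthogonalIdempotents_mul (hS : ∀ x : S, IsSuitable x) {n : ℕ}
    {a : Fin n → S} (ha : ∑ i, a i = 1) :
    ∃ r : Fin n → S, CompleteOrthogonalIdempotents fun i ↦ r i * a i := by
  obtain ⟨r, hr⟩ := exists_decomposesIdempotent hS .one (a := a) (by rw [ha, one_mul])
  exact ⟨r, hr.toOrthogonalIdempotents, by simpa using hr.sum_mul⟩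

end Suitable


theorem iSupIndep_option_elim_iff {α ι : Type*} [CompleteLattice α] [IsModularLattice α] {a : α}
    {t : ι → α} (ht : iSupIndep t) :
    iSupIndep (fun o : Option ι ↦ o.elim a t) ↔ Disjoint a (⨆ i, t i) := by
  simp only [iSupIndep_def, Option.forall, iSup_option, Option.elim_none, Option.elim_some, ne_eq,
    not_true_eq_false, reduceCtorEq, not_false_eq_true, iSup_pos, iSup_false, bot_sup_eq,
    Option.some_inj, and_iff_left_iff_imp]
  intro h i
  rw [iSup_split_single t i] at h
  rw [sup_comm]
  exact (ht i).disjoint_sup_right_of_disjoint_sup_left h.symm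

theorem iSupIndep_and_iSup_option_elim_iff {α ι : Type*} [CompleteLattice α] [IsModularLattice α]
    {a : α} {t : ι → α} (ht : iSupIndep t) :
    (iSupIndep (fun o : Option ι ↦ o.elim a t) ∧ ⨆ o : Option ι, o.elim a t = ⊤) ↔
      IsCompl a (⨆ i, t i) := by
  rw [iSupIndep_option_elim_iff ht, iSup_option_elim, isCompl_iff, codisjoint_iff]

section Modules

open LinearMap

variable {S A : Type*} [Ring S] [AddCommGroup A] [Module S A]

theorem isCompl_range_iff_exists_leftInverse {M : Type*} [AddCommGroup M] [Module S M]
    {f : M →ₗ[S] A} (hf : Function.Injective f) {N : Submodule S A} :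
    IsCompl (range f) N ↔ ∃ g : A →ₗ[S] M, g ∘ₗ f = .id ∧ ker g = N := by
  constructor
  · intro h
    refine ⟨(LinearEquiv.ofInjective f hf).symm ∘ₗ Submodule.projectionOnto _ N h, ?_, ?_⟩
    · ext x
      simp [LinearEquiv.symm_apply_eq, Submodule.projectionOnto_apply_of_mem_left, Subtype.ext_iff]
    · rw [LinearEquiv.ker_comp, Submodule.ker_projectionOnto]
  · rintro ⟨g, hgf, rfl⟩
    have hidem : IsIdempotentElem (f ∘ₗ g) := by
      rw [IsIdempotentElem, Module.End.mul_eq_comp, comp_assoc, ← comp_assoc g, hgf, id_comp]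
    have hg : range g = ⊤ := range_eq_top.2 (surjective_of_comp_eq_id _ _ hgf)
    simpa only [range_comp_of_range_eq_top f hg, ker_comp_of_ker_eq_bot g (ker_eq_bot.2 hf)]
      using hidem.isCompl

variable {ι : Type*}

theorem iSupIndep_range_of_orthogonalIdempotents {ε : ι → Module.End S A}
    (hε : OrthogonalIdempotents ε) : iSupIndep fun i ↦ range (ε i) := by
  refine fun i ↦ (hε.idem i).isCompl.disjoint.mono_right (iSup₂_le fun j hj ↦ ?_)
  exact range_le_ker_iff.2 (hε.ortho hj.symm)

variable [Fintype ι]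

theorem mem_iSup_of_forall_apply_mem {ε : ι → Module.End S A} (hε : ∑ i, ε i = 1)
    {P : ι → Submodule S A} {x : A} (hx : ∀ i, ε i x ∈ P i) : x ∈ ⨆ i, P i := by
  rw [← Module.End.one_apply (R := S) x, ← hε, LinearMap.sum_apply]
  exact sum_mem fun i _ ↦ Submodule.mem_iSup_of_mem i (hx i)

theorem iSup_range_eq_top_of_sum_eq_one {ε : ι → Module.End S A} (hε : ∑ i, ε i = 1) :
    ⨆ i, range (ε i) = ⊤ :=
  eq_top_iff.2 fun x _ ↦ mem_iSup_of_forall_apply_mem hε fun i ↦ mem_range_self (ε i) x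

theorem sum_comp_comp_of_sum_eq_one {M N : Type*} [AddCommGroup M] [Module S M] [AddCommGroup N]
    [Module S N] {ε : ι → Module.End S A} (hε : ∑ i, ε i = 1) (f : M →ₗ[S] A) (g : A →ₗ[S] N) :
    ∑ i, g ∘ₗ ε i ∘ₗ f = g ∘ₗ f := by
  ext x
  have hfx : ∑ i, ε i (f x) = f x := by
    rw [← LinearMap.sum_apply, hε, Module.End.one_apply]
  simp only [LinearMap.sum_apply, comp_apply, ← map_sum, hfx]

theorem exists_completeOrthogonalIdempotents_range_eq {P : ι → Submodule S A} (hP : iSupIndep P)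
    (htop : ⨆ i, P i = ⊤) :
    ∃ ε : ι → Module.End S A, CompleteOrthogonalIdempotents ε ∧ ∀ i, range (ε i) = P i := by
  have hc (i : ι) : IsCompl (P i) (⨆ j ≠ i, P j) :=
    ⟨hP i, codisjoint_iff.2 (by rw [← iSup_split_single, htop])⟩
  let ε (i : ι) : Module.End S A := (P i).projection _ (hc i)
  have hzero {i j : ι} (hij : i ≠ j) {x : A} (hx : x ∈ P j) : ε i x = 0 :=
    (Submodule.projection_apply_eq_zero_iff _).2 (Submodule.mem_iSup_of_mem j
      (Submodule.mem_iSup_of_mem hij.symm hx))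
  refine ⟨ε, ⟨⟨fun i ↦ Submodule.isIdempotentElem_projection _, fun i j hij ↦ ?_⟩, ?_⟩,
    fun i ↦ Submodule.range_projection _⟩
  · ext x
    exact hzero hij (Submodule.projection_apply_mem _ x)
  · have hle : ⨆ i, P i ≤ eqLocus (∑ i, ε i) 1 := iSup_le fun i x hx ↦ by
      rw [mem_eqLocus, LinearMap.sum_apply,
        Finset.sum_eq_single i (fun j _ hj ↦ hzero hj hx) (by simp)]
      exact Submodule.projection_apply_of_mem_left _ hx
    exact eqLocus_eq_top.1 (top_le_iff.1 (htop ▸ hle))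

/-- A retraction `π` of `f : M → A` with homogeneous kernel for the decomposition `A = ⨁ εᵢA`.
Since `ker π` is the range of `1 - fπ`, its stability under `εᵢ` is expressed by an equation. -/
structure IsHomogeneousRetraction {M : Type*} [AddCommGroup M] [Module S M] (f : M →ₗ[S] A)
    (ε : ι → Module.End S A) (π : A →ₗ[S] M) : Prop where
  comp_eq_id : π ∘ₗ f = .id
  comp_proj_comp (i : ι) : π ∘ₗ ε i ∘ₗ f ∘ₗ π = π ∘ₗ ε i

theorem exists_isHomogeneousRetraction_iff_exists_isCompl {M : Type*} [AddCommGroup M] [Module S M]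
    {f : M →ₗ[S] A} (hf : Function.Injective f)
    {ε : ι → Module.End S A} (hε : CompleteOrthogonalIdempotents ε) :
    (∃ π : A →ₗ[S] M, IsHomogeneousRetraction f ε π) ↔
      ∃ P : ι → Submodule S A, (∀ i, P i ≤ range (ε i)) ∧ IsCompl (range f) (⨆ i, P i) := by
  simp only [isCompl_range_iff_exists_leftInverse hf]
  constructor
  · rintro ⟨π, hπ, hπε⟩
    refine ⟨fun i ↦ range (ε i) ⊓ ker π, fun i ↦ inf_le_left, π, hπ,
      le_antisymm (fun z hz ↦ ?_) (iSup_le fun i ↦ inf_le_right)⟩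
    refine mem_iSup_of_forall_apply_mem hε.complete fun i ↦ ⟨mem_range_self _ z, ?_⟩
    rw [SetLike.mem_coe, mem_ker, ← comp_apply, ← hπε i]
    simp [mem_ker.1 hz]
  · rintro ⟨P, hP, π, hπ, hker⟩
    have hinv (i : ι) : ker π ≤ (ker π).comap (ε i) := by
      refine hker ▸ iSup_le fun j x hx ↦ ?_
      obtain ⟨y, rfl⟩ := hP j hx
      rw [Submodule.mem_comap, ← Module.End.mul_apply]
      obtain rfl | hij := eq_or_ne i j
      · rw [(hε.idem i).eq]
        exact Submodule.mem_iSup_of_mem i hx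
      · rw [hε.ortho hij]
        exact zero_mem _
    refine ⟨π, hπ, fun i ↦ LinearMap.ext fun z ↦ ?_⟩
    have hz : f (π z) - z ∈ ker π := by
      rw [mem_ker, map_sub, ← comp_apply, hπ, id_apply, sub_self]
    simpa [sub_eq_zero] using hinv i hz

theorem exists_isHomogeneousRetraction_of_completeOrthogonalIdempotents {M : Type*}
    [AddCommGroup M] [Module S M] {f : M →ₗ[S] A} {ε : ι → Module.End S A}
    (hε : CompleteOrthogonalIdempotents ε) {ρ : ι → A →ₗ[S] M} {e : ι → Module.End S M}
    (he : CompleteOrthogonalIdempotents e) (hρ : ∀ i, ρ i ∘ₗ ε i ∘ₗ f = e i) :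
    ∃ π : A →ₗ[S] M, IsHomogeneousRetraction f ε π := by
  obtain ⟨π, hπ⟩ : ∃ π : A →ₗ[S] M, ∀ x, π x = ∑ i, e i (ρ i (ε i x)) :=
    ⟨∑ i, e i ∘ₗ ρ i ∘ₗ ε i, fun x ↦ by simp⟩
  have hπε (i : ι) (x : A) : π (ε i x) = e i (ρ i (ε i x)) := by
    rw [hπ, Finset.sum_eq_single i, ← Module.End.mul_apply (ε i), (hε.idem i).eq]
    · intro j _ hj
      rw [← Module.End.mul_apply (ε j), hε.ortho hj, LinearMap.zero_apply, map_zero, map_zero]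
    · simp
  have heπ (i : ι) (x : A) : e i (π x) = e i (ρ i (ε i x)) := by
    rw [hπ, map_sum, Finset.sum_eq_single i, ← Module.End.mul_apply (e i), (he.idem i).eq]
    · intro j _ hj
      rw [← Module.End.mul_apply (e i), he.ortho hj.symm, LinearMap.zero_apply]
    · simp
  have hπεf (i : ι) : π ∘ₗ ε i ∘ₗ f = e i := by
    ext x
    calc π (ε i (f x)) = e i (ρ i (ε i (f x))) := hπε i (f x)
      _ = e i (e i x) := by rw [← hρ i]; rfl
      _ = e i x := LinearMap.congr_fun (he.idem i) x
  refine ⟨π, ?_, fun i ↦ LinearMap.ext fun x ↦ ?_⟩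
  · rw [← sum_comp_comp_of_sum_eq_one hε.complete f π, ← Module.End.one_eq_id, ← he.complete]
    exact Finset.sum_congr rfl fun i _ ↦ hπεf i
  · calc π (ε i (f (π x))) = e i (π x) := LinearMap.congr_fun (hπεf i) (π x)
      _ = π (ε i x) := by rw [heπ, hπε]

end Modules

section Exchange

variable {R : Type u} [Ring R] {M : Type u} [AddCommGroup M] [Module Rᵐᵒᵖ M]

theorem hasFiniteExchangeProperty_iff :
    HasFiniteExchangeProperty R M ↔
      ∀ (A : Type u) [AddCommGroup A] [Module Rᵐᵒᵖ A] (n : ℕ) (f : M →ₗ[Rᵐᵒᵖ] A)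
        (g : A →ₗ[Rᵐᵒᵖ] M) (ε : Fin n → Module.End Rᵐᵒᵖ A),
        g ∘ₗ f = .id → CompleteOrthogonalIdempotents ε →
        ∃ π : A →ₗ[Rᵐᵒᵖ] M, IsHomogeneousRetraction f ε π := by
  constructor
  · intro h A _ _ n f g ε hgf hε
    have hf : Function.Injective f := LinearMap.injective_of_comp_eq_id _ _ hgf
    have hind := iSupIndep_range_of_orthogonalIdempotents hε.toOrthogonalIdempotents
    obtain ⟨P, hP, hcompl⟩ := h A f.range g.ker n (fun i ↦ (ε i).range)
      ⟨LinearEquiv.ofInjective f hf⟩ ((isCompl_range_iff_exists_leftInverse hf).2 ⟨g, hgf, rfl⟩)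
      hind (iSup_range_eq_top_of_sum_eq_one hε.complete)
    rw [iSupIndep_and_iSup_option_elim_iff (hind.mono hP)] at hcompl
    exact (exists_isHomogeneousRetraction_iff_exists_isCompl hf hε).2 ⟨P, hP, hcompl⟩
  · rintro h A _ _ M' N n P ⟨φ⟩ hMN hP htop
    obtain ⟨ε, hε, hrange⟩ := exists_completeOrthogonalIdempotents_range_eq hP htop
    obtain ⟨f, hf, rfl⟩ : ∃ f : M →ₗ[Rᵐᵒᵖ] A, Function.Injective f ∧ f.range = M' :=
      ⟨M'.subtype ∘ₗ φ, M'.injective_subtype.comp φ.injective, by simp⟩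
    obtain ⟨g, hgf, -⟩ := (isCompl_range_iff_exists_leftInverse hf).1 hMN
    obtain ⟨P', hP', hcompl⟩ :=
      (exists_isHomogeneousRetraction_iff_exists_isCompl hf hε).1 (h A n f g ε hgf hε)
    simp only [hrange] at hP'
    exact ⟨P', hP', (iSupIndep_and_iSup_option_elim_iff (hP.mono hP')).2 hcompl⟩

theorem HasFiniteExchangeProperty.isSuitable_end (h : HasFiniteExchangeProperty R M)
    (a : Module.End Rᵐᵒᵖ M) : IsSuitable a := by
  have hpair : CompleteOrthogonalIdempotents
      ![LinearMap.inl Rᵐᵒᵖ M M ∘ₗ .fst _ M M, LinearMap.inr _ M M ∘ₗ .snd _ M M] :=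
    CompleteOrthogonalIdempotents.pair_iff'ₛ.2
      ⟨by ext <;> simp, by ext <;> simp, by ext <;> simp⟩
  obtain ⟨π, hπ, hπε⟩ := hasFiniteExchangeProperty_iff.1 h (M × M) 2 (a.prod (1 - a))
    (.fst _ M M + .snd _ M M) _ (by ext; simp) hpair
  obtain ⟨r, hr⟩ : ∃ r : Module.End Rᵐᵒᵖ M, r = π ∘ₗ .inl _ M M := ⟨_, rfl⟩
  obtain ⟨s, hs⟩ : ∃ s : Module.End Rᵐᵒᵖ M, s = π ∘ₗ .inr _ M M := ⟨_, rfl⟩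
  have hsum : r * a + s * (1 - a) = 1 := by
    ext x
    simpa [hr, hs, ← map_add] using LinearMap.congr_fun hπ x
  have hrar : r * a * r = r := by
    ext x
    simpa [hr] using LinearMap.congr_fun (hπε 0) (x, 0)
  refine isSuitable_of_left (e := r * a) ?_ rfl (sub_eq_of_eq_add' hsum.symm)
  rw [IsIdempotentElem, ← mul_assoc, hrar]

theorem hasFiniteExchangeProperty_of_isSuitable_end
    (h : ∀ a : Module.End Rᵐᵒᵖ M, IsSuitable a) : HasFiniteExchangeProperty R M := by
  refine hasFiniteExchangeProperty_iff.2 fun A _ _ n f g ε hgf hε ↦ ?_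
  obtain ⟨r, hr⟩ := exists_completeOrthogonalIdempotents_mul h
    ((sum_comp_comp_of_sum_eq_one hε.complete f g).trans hgf)
  exact exists_isHomogeneousRetraction_of_completeOrthogonalIdempotents (ρ := fun i ↦ r i ∘ₗ g)
    hε hr fun _ ↦ rfl

theorem stmt15_general (R : Type u) [Ring R] (M : Type u) [AddCommGroup M] [Module Rᵐᵒᵖ M] :
    HasFiniteExchangeProperty R M ↔
      ∀ a : Module.End Rᵐᵒᵖ M,
        ∃ e r s : Module.End Rᵐᵒᵖ M, IsIdempotentElem e ∧ e = a * r ∧ 1 - e = (1 - a) * s :=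
  ⟨fun h ↦ h.isSuitable_end, hasFiniteExchangeProperty_of_isSuitable_end⟩

end Exchange

theorem stmt15 (R : Type u) [Ring R] :
    HasFiniteExchangeProperty R R ↔
      ∀ a : R, ∃ e r s : R, IsIdempotentElem e ∧ e = a * r ∧ 1 - e = (1 - a) * s :=
  (stmt15_general R R).trans ((RingEquiv.moduleEndSelfOp R).toEquiv.forall_congr
    fun _ ↦ (isSuitable_map_iff _).symm).symm
end

section
/- Let A be a separative unital C*-algebra with real rank zero, let p, q ∈ A be projections, and let B = closure(ApA) + ℂ·1, a unital sub-C*-algebra of A. Then p and q are homotopic in A if and only if q ∈ B and p and q are unitarily equivalent in B. -/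
universe u

/-!
A continuous path of projections is, step by step, implemented by unitaries close to `1`, which are
polar parts of polynomials in the projections; they lie in every closed star subalgebra containing
the path, and the path stays in the closed ideal generated by `p` because conjugation preserves it.

Conversely, let `u` be a unitary of `closure(ApA) + ℂ·1`. Real rank zero provides projections `e`,
obtained from `p` by successively adding orthogonal projections subequivalent to `p`, that nearly
act as a unit on any given element of the closed ideal. Hence `u` is close to a unitary commuting
with such an `e`, and we may assume that `u` itself commutes with `e`. If `e = e' + r` with `r ≲ p`,
then `r` and `u r u⋆` are equivalent projections under `e`, each subequivalent to its complement
in `e`. Real rank zero makes them commute after an isotopy, and separativity then cancels the common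
part, so that they are conjugate by a unitary commuting with `e` and connected to `1` in `A`.
Correcting `u` by it, we reach a unitary commuting with `e'`, and eventually one commuting with `p`.
-/

open Set Topology unitInterval

namespace ProjectionHomotopy

attribute [local instance] CStarAlgebra.spectralOrder CStarAlgebra.spectralOrderedRing

variable {A : Type*} [CStarAlgebra A]

/-- The unitary factor `g (g⋆ g)^(-1/2)` of the polar decomposition of an invertible element `g`
of a C⋆-algebra. It is only meaningful when `g` is invertible. -/
noncomputable def unitaryPart (g : A) : A :=
  g * (star g * g) ^ (-(1 / 2) : ℝ)

lemma isStrictlyPositive_star_mul_self {g : A} (hg : IsUnit g) : IsStrictlyPositive (star g * g) :=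
  (hg.star.mul hg).isStrictlyPositive (star_mul_self_nonneg g)

lemma rpow_mem_of_isClosed {S : StarSubalgebra ℂ A} (hS : IsClosed (S : Set A)) {a : A}
    (ha₀ : 0 ≤ a) (ha : a ∈ S) (x : ℝ) : a ^ x ∈ S := by
  rw [CFC.rpow_eq_cfc_real ha₀]
  exact cfc_mem (𝕜' := ℂ) (hs := hS) _ ha

lemma unitaryPart_mem_unitary {g : A} (hg : IsUnit g) : unitaryPart g ∈ unitary A := by
  have hpos := isStrictlyPositive_star_mul_self hg
  refine (hg.mul (hpos.isUnit.cfcRpow _ hpos.nonneg)).mem_unitary_of_star_mul_self ?_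
  have h_sa : star ((star g * g) ^ (-(1 / 2) : ℝ)) = (star g * g) ^ (-(1 / 2) : ℝ) :=
    (IsSelfAdjoint.of_nonneg CFC.rpow_nonneg).star_eq
  rw [star_mul, h_sa, ← CFC.conjugate_rpow_neg_one_half (star g * g) hpos]
  simp only [mul_assoc]

lemma unitaryPart_mem {S : StarSubalgebra ℂ A} (hS : IsClosed (S : Set A)) {g : A} (hg : g ∈ S) :
    unitaryPart g ∈ S :=
  mul_mem hg (rpow_mem_of_isClosed hS (star_mul_self_nonneg g) (mul_mem (star_mem hg) hg) _)

lemma unitaryPart_unitary_mul {v : A} (hv : v ∈ unitary A) (g : A) :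
    unitaryPart (v * g) = v * unitaryPart g := by
  have h_abs : star (v * g) * (v * g) = star g * g := by
    rw [star_mul, mul_assoc, ← mul_assoc (star v), (Unitary.mem_iff.mp hv).1, one_mul]
  rw [unitaryPart, h_abs, mul_assoc, unitaryPart]

lemma unitaryPart_one : unitaryPart (1 : A) = 1 := by
  rw [unitaryPart, star_one, mul_one, CFC.one_rpow, mul_one]

lemma unitaryPart_of_mem_unitary {v : A} (hv : v ∈ unitary A) : unitaryPart v = v := by
  simpa only [mul_one, unitaryPart_one] using unitaryPart_unitary_mul hv 1

lemma continuous_unitaryPart {X : Type*} [TopologicalSpace X] {g : X → A} (hg : Continuous g)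
    (hg_unit : ∀ x, IsUnit (g x)) : Continuous fun x ↦ unitaryPart (g x) := by
  have h_nonneg (x : X) : 0 ≤ star (g x) * g x := star_mul_self_nonneg _
  have h_spectrum : (⋃ x, spectrum ℝ (star (g x) * g x)) ⊆ Ioi 0 := iUnion_subset fun x ↦
    (StarOrderedRing.isStrictlyPositive_iff_spectrum_pos _).mp
      (isStrictlyPositive_star_mul_self (hg_unit x))
  simp only [unitaryPart, CFC.rpow_eq_cfc_real (h_nonneg _)]
  refine hg.mul (Continuous.cfc_of_mem_nhdsSet (s := Ioi 0) _
    (isOpen_Ioi.mem_nhdsSet.mpr h_spectrum) (hg.star.mul hg) (fun x ↦ .of_nonneg (h_nonneg x)) ?_)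
  exact continuousOn_id.rpow_const fun x hx ↦ .inl (ne_of_gt hx)

lemma unitaryPart_conj_eq {z r q : A} (hz : IsUnit z) (hr : IsSelfAdjoint r) (hq : IsSelfAdjoint q)
    (h : z * r = q * z) : unitaryPart z * r * star (unitaryPart z) = q := by
  have h_star : r * star z = star z * q := by
    simpa only [star_mul, hr.star_eq, hq.star_eq] using congrArg star h
  have h_comm : Commute (star z * z) r := by
    rw [commute_iff_eq, mul_assoc, h, ← mul_assoc, ← h_star, mul_assoc]
  have h_intertwine : unitaryPart z * r = q * unitaryPart z := by
    rw [unitaryPart, mul_assoc, CFC.rpow_def, (h_comm.cfc_nnreal _).eq, ← mul_assoc, h, mul_assoc]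
  rw [h_intertwine, mul_assoc, Unitary.mul_star_self_of_mem (unitaryPart_mem_unitary hz), mul_one]

lemma isUnit_of_norm_sub_one_lt {z : A} (h : ‖z - 1‖ < 1) : IsUnit z := by
  simpa only [sub_sub_cancel] using
    isUnit_one_sub_of_norm_lt_one (x := 1 - z) (by rwa [norm_sub_rev])

lemma joined_one_unitaryPart {z : A} (h : ‖z - 1‖ < 1) :
    Joined 1 (⟨unitaryPart z, unitaryPart_mem_unitary (isUnit_of_norm_sub_one_lt h)⟩ :
      unitary A) := by
  have h_unit (t : I) : IsUnit (1 + (t : ℝ) • (z - 1)) := by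
    refine isUnit_of_norm_sub_one_lt ?_
    rw [add_sub_cancel_left, norm_smul, Real.norm_of_nonneg t.2.1]
    exact (mul_le_of_le_one_left (norm_nonneg _) t.2.2).trans_lt h
  refine ⟨⟨⟨fun t ↦ ⟨_, unitaryPart_mem_unitary (h_unit t)⟩, ?_⟩, ?_, ?_⟩⟩
  · exact (continuous_unitaryPart (by fun_prop) h_unit).subtype_mk _
  · simp [unitaryPart_one]
  · simp

/-- Two elements are isotopic relative to `S` if they are conjugate by a unitary of `S` lying in
the identity component of the unitary group of the *ambient* algebra `A`; the path to `1` need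
not stay in `S`. -/
def UnitarilyIsotopic (S : StarSubalgebra ℂ A) (r q : A) : Prop :=
  ∃ g : unitary A, Joined 1 g ∧ (g : A) ∈ S ∧ (g : A) * r * star (g : A) = q

namespace UnitarilyIsotopic

variable {S : StarSubalgebra ℂ A} {r q s : A}

lemma refl (S : StarSubalgebra ℂ A) (r : A) : UnitarilyIsotopic S r r :=
  ⟨1, .refl 1, one_mem S, by simp⟩

lemma symm (h : UnitarilyIsotopic S r q) : UnitarilyIsotopic S q r := by
  obtain ⟨g, hg, hgS, rfl⟩ := h
  refine ⟨g⁻¹, by simpa only [inv_one] using hg.inv, star_mem hgS, ?_⟩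
  have h_inv : ((g⁻¹ : unitary A) : A) * g = 1 := Unitary.star_mul_self_of_mem g.2
  calc ((g⁻¹ : unitary A) : A) * (g * r * star (g : A)) * star ((g⁻¹ : unitary A) : A)
      = ((g⁻¹ : unitary A) : A) * g * r * star (((g⁻¹ : unitary A) : A) * g) := by
        simp only [star_mul, mul_assoc]
    _ = r := by rw [h_inv, one_mul, star_one, mul_one]

lemma trans (h : UnitarilyIsotopic S r q) (h' : UnitarilyIsotopic S q s) :
    UnitarilyIsotopic S r s := by
  obtain ⟨g, hg, hgS, rfl⟩ := h
  obtain ⟨k, hk, hkS, rfl⟩ := h'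
  refine ⟨k * g, by simpa only [mul_one] using hk.mul hg, mul_mem hkS hgS, ?_⟩
  simp only [Submonoid.coe_mul, star_mul, mul_assoc]

end UnitarilyIsotopic

lemma unitarilyIsotopic_of_norm_sub_lt {S : StarSubalgebra ℂ A} (hS : IsClosed (S : Set A))
    {r q : A} (hr : IsStarProjection r) (hq : IsStarProjection q) (hrS : r ∈ S) (hqS : q ∈ S)
    (h : ‖q - r‖ < 1 / 4) : UnitarilyIsotopic S r q := by
  set z : A := q * r + (1 - q) * (1 - r) with hz_def
  have hr' := hr.isIdempotentElem.eq
  have hq' := hq.isIdempotentElem.eq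
  have hz_sub : z - 1 = (q - r) * r + (q - r) * r - (q - r) := by
    rw [hz_def]
    linear_combination (norm := noncomm_ring) 2 * hr'
  have hz_norm : ‖z - 1‖ < 1 := by
    have h_mul : ‖(q - r) * r‖ ≤ ‖q - r‖ :=
      (norm_mul_le _ _).trans (mul_le_of_le_one_right (norm_nonneg _) hr.norm_le)
    rw [hz_sub]
    linarith [norm_sub_le ((q - r) * r + (q - r) * r) (q - r),
      norm_add_le ((q - r) * r) ((q - r) * r)]
  have hz_unit : IsUnit z := isUnit_of_norm_sub_one_lt hz_norm
  have hz_mem : z ∈ S :=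
    add_mem (mul_mem hqS hrS) (mul_mem (sub_mem (one_mem S) hqS) (sub_mem (one_mem S) hrS))
  have hz_intertwine : z * r = q * z := by
    rw [hz_def, add_mul, mul_add, mul_assoc, mul_assoc, hr', hr.one_sub_mul_self, ← mul_assoc,
      ← mul_assoc, hq', hq.mul_one_sub_self, mul_zero, zero_mul]
  exact ⟨_, joined_one_unitaryPart hz_norm, unitaryPart_mem hS hz_mem,
    unitaryPart_conj_eq hz_unit hr.isSelfAdjoint hq.isSelfAdjoint hz_intertwine⟩

lemma unitarilyIsotopic_of_continuous {X : Type*} [TopologicalSpace X] [PreconnectedSpace X]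
    {S : StarSubalgebra ℂ A} (hS : IsClosed (S : Set A)) {P : X → A} (hP : Continuous P)
    (hP_proj : ∀ x, IsStarProjection (P x)) (hPS : ∀ x, P x ∈ S) (x y : X) :
    UnitarilyIsotopic S (P x) (P y) := by
  have : Std.Symm fun x y ↦ UnitarilyIsotopic S (P x) (P y) := ⟨fun _ _ h ↦ h.symm⟩
  refine PreconnectedSpace.induction₂ (fun x y ↦ UnitarilyIsotopic S (P x) (P y)) (fun x ↦ ?_)
    ⟨fun _ _ _ h h' ↦ h.trans h'⟩ x y
  have h_ball : Metric.ball (P x) (1 / 4) ∈ 𝓝 (P x) := Metric.ball_mem_nhds _ (by norm_num)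
  filter_upwards [hP.continuousAt.eventually h_ball] with y hy
  exact unitarilyIsotopic_of_norm_sub_lt hS (hP_proj x) (hP_proj y) (hPS x) (hPS y)
    (by rwa [← dist_eq_norm])

section MurrayVonNeumann

/-- Murray–von Neumann equivalence `a ~ b` in a monoid with involution. -/
def MvNEquiv {M : Type*} [Mul M] [Star M] (a b : M) : Prop :=
  ∃ v, star v * v = a ∧ v * star v = b

/-- Murray–von Neumann subequivalence `a ≲ b`: for projections, `a` is equivalent to a subprojection
of `b`. The second condition says that the range of `v` lies under `b`. -/
def MvNLE {M : Type*} [Mul M] [Star M] (a b : M) : Prop :=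
  ∃ v, star v * v = a ∧ b * v = v

lemma MvNEquiv.symm {M : Type*} [Mul M] [InvolutiveStar M] {a b : M} (h : MvNEquiv a b) :
    MvNEquiv b a :=
  let ⟨v, hva, hvb⟩ := h
  ⟨star v, by rwa [star_star], by rwa [star_star]⟩

lemma MvNEquiv.trans {M : Type*} [Semigroup M] [StarMul M] {a b c : M} (ha : IsIdempotentElem a)
    (hc : IsIdempotentElem c) (hab : MvNEquiv a b) (hbc : MvNEquiv b c) : MvNEquiv a c := by
  obtain ⟨v, hva, hvb⟩ := hab
  obtain ⟨w, hwb, hwc⟩ := hbc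
  refine ⟨w * v, ?_, ?_⟩
  · calc star (w * v) * (w * v) = star v * (star w * w) * v := by simp only [star_mul, mul_assoc]
      _ = star v * v * (star v * v) := by simp only [hwb, ← hvb, mul_assoc]
      _ = a := by rw [hva, ha.eq]
  · calc w * v * star (w * v) = w * (v * star v) * star w := by simp only [star_mul, mul_assoc]
      _ = w * star w * (w * star w) := by simp only [hvb, ← hwb, mul_assoc]
      _ = c := by rw [hwc, hc.eq]

lemma mul_eq_zero_swap {R : Type*} [NonUnitalNonAssocSemiring R] [StarRing R] {a b : R}
    (ha : IsSelfAdjoint a) (hb : IsSelfAdjoint b) (h : a * b = 0) : b * a = 0 := by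
  simpa only [star_mul, ha.star_eq, hb.star_eq, star_zero] using congrArg star h

lemma mul_eq_self_swap {R : Type*} [Mul R] [StarMul R] {a b : R}
    (ha : IsSelfAdjoint a) (hb : IsSelfAdjoint b) (h : a * b = b) : b * a = b := by
  simpa only [star_mul, ha.star_eq, hb.star_eq] using congrArg star h

variable {a a' b b' v : A}

lemma mul_projection_of_star_mul_self_eq (ha : IsStarProjection a) (hv : star v * v = a) :
    v * a = v := by
  have h_zero : star (v * (1 - a)) * (v * (1 - a)) = 0 := by
    calc star (v * (1 - a)) * (v * (1 - a)) = star (1 - a) * (star v * v * (1 - a)) := by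
          simp only [star_mul, mul_assoc]
      _ = 0 := by rw [hv, ha.mul_one_sub_self, mul_zero]
  have := CStarRing.star_mul_self_eq_zero_iff _ |>.mp h_zero
  rwa [mul_sub, mul_one, sub_eq_zero, eq_comm] at this

lemma isStarProjection_mul_star_self (ha : IsStarProjection a) (hv : star v * v = a) :
    IsStarProjection (v * star v) where
  isIdempotentElem := by
    rw [IsIdempotentElem, mul_assoc, ← mul_assoc (star v), hv, ← mul_assoc,
      mul_projection_of_star_mul_self_eq ha hv]
  isSelfAdjoint := .mul_star_self v

lemma range_mul_of_mul_star_self_eq (ha : IsStarProjection a) (hva : star v * v = a)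
    (hvb : v * star v = b) : b * v = v := by
  rw [← hvb, mul_assoc, hva, mul_projection_of_star_mul_self_eq ha hva]

lemma MvNEquiv.add (ha : IsStarProjection a) (ha' : IsStarProjection a')
    (hb : IsSelfAdjoint b) (haa' : a * a' = 0) (hbb' : b * b' = 0)
    (h : MvNEquiv a b) (h' : MvNEquiv a' b') : MvNEquiv (a + a') (b + b') := by
  obtain ⟨v, hva, hvb⟩ := h
  obtain ⟨w, hwa, hwb⟩ := h'
  have h_range : star v * w = 0 := by
    rw [← range_mul_of_mul_star_self_eq ha hva hvb, ← range_mul_of_mul_star_self_eq ha' hwa hwb,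
      star_mul, hb.star_eq, mul_assoc, ← mul_assoc b, hbb', zero_mul, mul_zero]
  have h_support : v * star w = 0 := by
    rw [← mul_projection_of_star_mul_self_eq ha hva, ← mul_projection_of_star_mul_self_eq ha' hwa,
      star_mul, ha'.isSelfAdjoint.star_eq, mul_assoc, ← mul_assoc a, haa', zero_mul, mul_zero]
  have h_range' : star w * v = 0 := by simpa using congrArg star h_range
  have h_support' : w * star v = 0 := by simpa using congrArg star h_support
  exact ⟨v + w, by simp [mul_add, add_mul, *], by simp [mul_add, add_mul, *]⟩

lemma MvNLE.mono_left (h : MvNLE a b) (ha' : IsStarProjection a') (haa' : a * a' = a') :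
    MvNLE a' b := by
  obtain ⟨v, hva, hvb⟩ := h
  refine ⟨v * a', ?_, by rw [← mul_assoc, hvb]⟩
  rw [star_mul, ha'.isSelfAdjoint.star_eq, mul_assoc, ← mul_assoc (star v), hva, haa',
    ha'.isIdempotentElem.eq]

lemma MvNLE.mono_right (h : MvNLE a b) (hbb' : b' * b = b) : MvNLE a b' :=
  let ⟨v, hva, hvb⟩ := h
  ⟨v, hva, by rw [← hvb, ← mul_assoc, hbb']⟩

end MurrayVonNeumann

section Swap

/-- The elements of `A` commuting with a self-adjoint `f`. -/
abbrev commutant (f : A) : StarSubalgebra ℂ A :=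
  StarSubalgebra.centralizer ℂ {f}

lemma mem_commutant_iff {f x : A} (hf : IsSelfAdjoint f) : x ∈ commutant f ↔ f * x = x * f := by
  simp [StarSubalgebra.mem_centralizer_iff, hf.star_eq]

lemma isClosed_commutant (f : A) : IsClosed (commutant f : Set A) := by
  rw [StarSubalgebra.coe_centralizer]
  exact Set.isClosed_centralizer _

lemma joined_I_of_isSelfAdjoint (u : unitary A) (hu : IsSelfAdjoint (u : A)) :
    ∃ j : unitary A, (j : A) = Complex.I • 1 ∧ Joined j u := by
  refine ⟨⟨Complex.I • 1, ?_⟩, rfl, Unitary.joined _ _ ?_⟩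
  · simp [Unitary.mem_iff, smul_smul]
  · have h_sq : star ((u : A) - Complex.I • 1) * ((u : A) - Complex.I • 1) = 1 + 1 := by
      have huu : (u : A) * u = 1 := by
        simpa only [hu.star_eq] using Unitary.star_mul_self_of_mem u.2
      simp only [star_sub, hu.star_eq, star_smul, RCLike.star_def, Complex.conj_I, star_one,
        neg_smul, sub_neg_eq_add, mul_sub, add_mul, huu, smul_mul_assoc, one_mul, mul_smul_comm,
        mul_one, smul_add, smul_smul, Complex.I_mul_I, one_smul]
      abel
    have h_norm := CStarRing.norm_star_mul_self (x := (u : A) - Complex.I • 1)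
    have h_one : ‖(1 : A)‖ ≤ 1 := (IsStarProjection.one A).norm_le
    rw [h_sq] at h_norm
    nlinarith [norm_add_le (1 : A) 1, norm_nonneg ((u : A) - Complex.I • 1)]

lemma joined_one_of_isSelfAdjoint (u : unitary A) (hu : IsSelfAdjoint (u : A)) : Joined 1 u := by
  obtain ⟨j, hj, hju⟩ := joined_I_of_isSelfAdjoint u hu
  obtain ⟨k, hk, hk1⟩ := joined_I_of_isSelfAdjoint (1 : unitary A) (.one A)
  obtain rfl : j = k := Subtype.ext (hj.trans hk.symm)
  exact hk1.symm.trans hju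

section

variable {a b c f v : A}

lemma exists_unitary_swap (ha : IsStarProjection a) (hb : IsStarProjection b) (hab : a * b = 0)
    (hva : star v * v = a) (hvb : v * star v = b) :
    ∃ u : unitary A, (u : A) = v + star v + (1 - a - b) ∧ IsSelfAdjoint (u : A) ∧
      (u : A) * a * star (u : A) = b := by
  have h_va : v * a = v := mul_projection_of_star_mul_self_eq ha hva
  have h_bv : b * v = v := range_mul_of_mul_star_self_eq ha hva hvb
  have h_ba : b * a = 0 := mul_eq_zero_swap ha.isSelfAdjoint hb.isSelfAdjoint hab
  have h_vb : v * b = 0 := by rw [← h_va, mul_assoc, hab, mul_zero]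
  have h_av : a * v = 0 := by rw [← h_bv, ← mul_assoc, hab, zero_mul]
  have h_vv : v * v = 0 := by
    nth_rewrite 1 [← h_va]
    rw [mul_assoc, h_av, mul_zero]
  have h_av' : a * star v = star v := by simpa [ha.isSelfAdjoint.star_eq] using congrArg star h_va
  have h_vb' : star v * b = star v := by simpa [hb.isSelfAdjoint.star_eq] using congrArg star h_bv
  have h_va' : star v * a = 0 := by simpa [ha.isSelfAdjoint.star_eq] using congrArg star h_av
  have h_bv' : b * star v = 0 := by simpa [hb.isSelfAdjoint.star_eq] using congrArg star h_vb
  have h_vv' : star v * star v = 0 := by simpa using congrArg star h_vv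
  have ha' := ha.isIdempotentElem.eq
  have hb' := hb.isIdempotentElem.eq
  set u : A := v + star v + (1 - a - b) with hu
  have h_sa : star u = u := by
    simp [hu, ha.isSelfAdjoint.star_eq, hb.isSelfAdjoint.star_eq, add_comm]
  have h_sq : u * u = 1 := by
    simp only [mul_add, add_mul, mul_sub, sub_mul, mul_one, one_mul, *]; abel
  have h_conj : u * a * star u = b := by
    rw [h_sa]
    simp only [mul_add, add_mul, mul_sub, sub_mul, mul_one, one_mul, zero_mul, *]; abel
  exact ⟨⟨u, Unitary.mem_iff.mpr ⟨by rw [h_sa, h_sq], by rw [h_sa, h_sq]⟩⟩, rfl, h_sa, h_conj⟩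

lemma UnitarilyIsotopic.add_of_mul_eq_zero (ha : IsStarProjection a) (hb : IsStarProjection b)
    (hab : a * b = 0) (h : MvNEquiv a b) (hf : IsSelfAdjoint f) (hfa : f * a = a) (hfb : f * b = b)
    (hc : IsSelfAdjoint c) (hca : c * a = 0) (hcb : c * b = 0) :
    UnitarilyIsotopic (commutant f) (a + c) (b + c) := by
  obtain ⟨v, hva, hvb⟩ := h
  have h_va : v * a = v := mul_projection_of_star_mul_self_eq ha hva
  have h_bv : b * v = v := range_mul_of_mul_star_self_eq ha hva hvb
  have h_vf : v * f = v := by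
    rw [← h_va, mul_assoc, mul_eq_self_swap hf ha.isSelfAdjoint hfa]
  have h_fv : f * v = v := by rw [← h_bv, ← mul_assoc, hfb]
  have h_cv : c * v = 0 := by rw [← h_bv, ← mul_assoc, hcb, zero_mul]
  have h_vc : v * c = 0 := by
    rw [← h_va, mul_assoc, mul_eq_zero_swap hc ha.isSelfAdjoint hca, mul_zero]
  have h_fv' : star v * f = star v := by simpa [hf.star_eq] using congrArg star h_fv
  have h_vf' : f * star v = star v := by simpa [hf.star_eq] using congrArg star h_vf
  have h_vc' : c * star v = 0 := by simpa [hc.star_eq] using congrArg star h_vc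
  obtain ⟨u, hu, hu_sa, hu_conj⟩ := exists_unitary_swap ha hb hab hva hvb
  have h_cu : c * u = c := by simp [mul_add, mul_sub, *]
  have h_uc : u * c = c := by
    simpa only [star_mul, hc.star_eq, hu_sa.star_eq] using congrArg star h_cu
  refine ⟨u, joined_one_of_isSelfAdjoint u hu_sa, ?_, ?_⟩
  · rw [mem_commutant_iff hf, hu]
    simp [mul_add, add_mul, mul_sub, sub_mul, mul_eq_self_swap hf ha.isSelfAdjoint hfa,
      mul_eq_self_swap hf hb.isSelfAdjoint hfb, *]
  · rw [mul_add, add_mul, hu_conj, h_uc, hu_sa.star_eq, h_cu]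

end

end Swap

section RealRankZero

lemma inverse_mem {S : StarSubalgebra ℂ A} (hS : IsClosed (S : Set A)) {x : A} (hx : x ∈ S) :
    Ring.inverse x ∈ S := by
  by_cases hx_unit : IsUnit x
  · obtain ⟨y, hy⟩ :=
      ((StarSubalgebra.coe_isUnit S (hS := hS) (a := ⟨x, hx⟩)).mp hx_unit).exists_right_inv
    have hxy : x * (y : A) = 1 := congrArg Subtype.val hy
    rw [show Ring.inverse x = y by
      simpa only [hxy, mul_one] using Ring.inverse_mul_cancel_left x (y : A) hx_unit]
    exact y.2
  · rw [Ring.inverse_non_unit x hx_unit]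
    exact zero_mem S

/-- A C⋆-algebra has real rank zero if its invertible self-adjoint elements are dense among the
self-adjoint ones. -/
def RealRankZero (A : Type*) [CStarAlgebra A] : Prop :=
  ∀ x : A, IsSelfAdjoint x → x ∈ closure {y : A | IsSelfAdjoint y ∧ IsUnit y}

/-- The corner `r a r` of `a` along a projection `r`, completed by `1` on the complement so that
invertibility in `r A r` becomes invertibility in `A`. -/
def compression (r a : A) : A :=
  (1 - r) + r * a * r

/-- The shear path `t ↦ 1 - t (r a r)⁻¹ a (1 - r)`. At `t = 1` it performs the Schur complement of
`a` along `r`: conjugating `a` by it makes `a` block diagonal. It is only meaningful when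
`compression r a` is invertible. -/
noncomputable def shear (r a : A) (t : ℝ) : A :=
  1 - t • (Ring.inverse (compression r a) * (r * a * (1 - r)))

section

variable {r a : A}

lemma commute_compression (hr : IsStarProjection r) (a : A) : Commute r (compression r a) := by
  have hr' := hr.isIdempotentElem.eq
  rw [commute_iff_eq, compression]
  linear_combination (norm := noncomm_ring) hr' * a * r - r * a * hr'

lemma commute_inverse_compression (hr : IsStarProjection r) (a : A) :
    Commute r (Ring.inverse (compression r a)) :=
  (mem_commutant_iff hr.isSelfAdjoint).mp <| inverse_mem (isClosed_commutant r) <|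
    (mem_commutant_iff hr.isSelfAdjoint).mpr (commute_compression hr a)

lemma shear_offDiagonal_mul_self (hr : IsStarProjection r) (a : A) :
    Ring.inverse (compression r a) * (r * a * (1 - r)) *
      (Ring.inverse (compression r a) * (r * a * (1 - r))) = 0 := by
  have h_comm := (commute_inverse_compression hr a).eq
  calc _ = Ring.inverse (compression r a) * r * a * (1 - r) *
        (Ring.inverse (compression r a) * r) * a * (1 - r) := by simp only [mul_assoc]
    _ = Ring.inverse (compression r a) * r * a * ((1 - r) * r) *
        Ring.inverse (compression r a) * a * (1 - r) := by simp only [← h_comm, mul_assoc]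
    _ = 0 := by rw [hr.one_sub_mul_self]; simp only [mul_zero, zero_mul]

lemma isUnit_shear (hr : IsStarProjection r) (a : A) (t : ℝ) : IsUnit (shear r a t) := by
  refine IsNilpotent.isUnit_one_sub ⟨2, ?_⟩
  rw [pow_two, smul_mul_smul_comm, shear_offDiagonal_mul_self hr, smul_zero]

lemma continuous_shear (r a : A) : Continuous (shear r a) := by
  unfold shear
  fun_prop

lemma shear_zero (r a : A) : shear r a 0 = 1 := by
  simp [shear]

lemma shear_mul_self (hr : IsStarProjection r) (a : A) (t : ℝ) : shear r a t * r = r := by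
  rw [shear, sub_mul, one_mul, smul_mul_assoc, mul_assoc, mul_assoc, hr.one_sub_mul_self, mul_zero,
    mul_zero, smul_zero, sub_zero]

lemma commute_conj_shear (hr : IsStarProjection r) (ha : IsSelfAdjoint a)
    (he : IsUnit (compression r a)) :
    Commute r (star (shear r a 1) * a * shear r a 1) := by
  have hr' := hr.isIdempotentElem.eq
  set e := compression r a with he_def
  set n := Ring.inverse e * (r * a * (1 - r)) with hn_def
  have h_shear : shear r a 1 = 1 - n := by rw [shear, one_smul]
  have h_rn : r * n = n := by
    rw [hn_def, ← mul_assoc, (commute_inverse_compression hr a).eq]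
    simp only [mul_assoc]
    rw [← mul_assoc r r, hr']
  have h_ran : r * a * n = r * a * (1 - r) := by
    have h_er : r * a * r = e * r := by
      rw [he_def, compression]
      linear_combination (norm := noncomm_ring) hr' - r * a * hr'
    rw [← h_rn, ← mul_assoc, h_er, mul_assoc, h_rn, hn_def, Ring.mul_inverse_cancel_left _ _ he]
  have h_left : r * (star (shear r a 1) * a * shear r a 1) = r * a * r := by
    have h_star : r * star (shear r a 1) = r := by
      simpa only [star_mul, hr.isSelfAdjoint.star_eq] using congrArg star (shear_mul_self hr a 1)
    rw [mul_assoc, ← mul_assoc, h_star, h_shear, ← mul_assoc, mul_sub, h_ran]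
    noncomm_ring
  have h_right := congrArg star h_left
  simp only [star_mul, star_star, hr.isSelfAdjoint.star_eq, ha.star_eq] at h_right
  rw [commute_iff_eq, h_left]
  simpa only [mul_assoc] using h_right.symm

lemma compression_mem {S : StarSubalgebra ℂ A} (hr : r ∈ S) (ha : a ∈ S) : compression r a ∈ S :=
  add_mem (sub_mem (one_mem S) hr) (mul_mem (mul_mem hr ha) hr)

end

lemma RealRankZero.mem_closure_of_mul_eq (h : RealRankZero A) {r x : A} (hr : IsStarProjection r)
    (hx : IsSelfAdjoint x) (hrx : r * x = r) :
    x ∈ closure {y : A | IsSelfAdjoint y ∧ IsUnit y ∧ Commute r y} := by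
  have h_compression : compression r x = 1 := by
    rw [compression, hrx, hr.isIdempotentElem.eq, sub_add_cancel]
  have h_shear : shear r x 1 = 1 := by
    rw [shear, hrx, hr.mul_one_sub_self, mul_zero, smul_zero, sub_zero]
  have h_cont : Continuous fun y : A ↦ compression r y := by
    unfold compression
    fun_prop
  have h_inverse : ContinuousAt (fun y : A ↦ Ring.inverse (compression r y)) x := by
    have : ContinuousAt Ring.inverse (compression r x) := by
      rw [h_compression]
      exact NormedRing.inverse_continuousAt 1
    exact ContinuousAt.comp' this h_cont.continuousAt
  have h_tendsto : Filter.Tendsto (fun y ↦ star (shear r y 1) * y * shear r y 1) (𝓝 x) (𝓝 x) := by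
    have h_shear_cont : ContinuousAt (fun y ↦ shear r y 1) x := by
      unfold shear
      fun_prop
    have : ContinuousAt (fun y ↦ star (shear r y 1) * y * shear r y 1) x := by fun_prop
    simpa only [ContinuousAt, h_shear, star_one, one_mul, mul_one] using this
  have h_unit : ∀ᶠ y in 𝓝 x, IsUnit (compression r y) :=
    h_cont.tendsto' x 1 h_compression |>.eventually (Units.nhds 1)
  have h_freq := (mem_closure_iff_frequently.mp (h x hx)).and_eventually h_unit
  refine mem_closure_iff_frequently.mpr (h_tendsto.frequently (h_freq.mono ?_))
  rintro y ⟨⟨hy, hy_unit⟩, hy_compression⟩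
  exact ⟨hy.conjugate' _, ((isUnit_shear hr y 1).star.mul hy_unit).mul (isUnit_shear hr y 1),
    commute_conj_shear hr hy hy_compression⟩

lemma isUnit_add_of_commute {r b c : A} (hr : IsIdempotentElem r) (hb : IsUnit b) (hc : IsUnit c)
    (hrb : Commute r b) (hrc : Commute r c) : IsUnit (r * b + (1 - r) * c) := by
  obtain ⟨b, rfl⟩ := hb
  obtain ⟨c, rfl⟩ := hc
  have key (b c : Aˣ) (hrb : Commute r b) (hrc : Commute r c) :
      (r * b + (1 - r) * c) * (r * ↑b⁻¹ + (1 - r) * ↑c⁻¹) = 1 := by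
    have hrb' : r * b = b * r := hrb.eq
    have hrc' : (1 - r) * c = c * (1 - r) := ((Commute.one_left (c : A)).sub_left hrc).eq
    calc (r * b + (1 - r) * c) * (r * ↑b⁻¹ + (1 - r) * ↑c⁻¹)
        = b * (r * r) * ↑b⁻¹ + b * (r * (1 - r)) * ↑c⁻¹ + c * ((1 - r) * r) * ↑b⁻¹
          + c * ((1 - r) * (1 - r)) * ↑c⁻¹ := by
          rw [hrb', hrc']
          simp only [add_mul, mul_add, mul_assoc]
          abel
      _ = b * r * ↑b⁻¹ + c * (1 - r) * ↑c⁻¹ := by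
        rw [hr.eq, hr.one_sub.eq, hr.one_sub_mul_self, hr.mul_one_sub_self]
        simp only [mul_zero, zero_mul, add_zero]
      _ = 1 := by
        rw [← hrb', ← hrc', mul_assoc, mul_assoc, Units.mul_inv, Units.mul_inv, mul_one, mul_one,
          add_sub_cancel]
  exact isUnit_iff_exists.mpr ⟨_, key b c hrb hrc, by
    simpa only [inv_inv] using key b⁻¹ c⁻¹ hrb.units_inv_right hrc.units_inv_right⟩

lemma RealRankZero.mem_closure_of_commute (h : RealRankZero A) {r x : A} (hr : IsStarProjection r)
    (hx : IsSelfAdjoint x) (hrx : Commute r x) :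
    x ∈ closure {y : A | IsSelfAdjoint y ∧ IsUnit y ∧ Commute r y} := by
  have hr' := hr.isIdempotentElem.eq
  have h_comm {y : A} (hry : Commute r y) : Commute (1 - r) y := (Commute.one_left y).sub_left hry
  have h_near₁ := h.mem_closure_of_mul_eq (x := (1 - r) + r * x) hr.one_sub
    (hr.one_sub.isSelfAdjoint.add (IsSelfAdjoint.commute_iff hr.isSelfAdjoint hx |>.mp hrx)) (by
      rw [mul_add, hr.one_sub.isIdempotentElem.eq, ← mul_assoc, hr.one_sub_mul_self, zero_mul,
        add_zero])
  have h_near₂ := h.mem_closure_of_mul_eq (x := r + (1 - r) * x) hr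
    (hr.isSelfAdjoint.add
      (IsSelfAdjoint.commute_iff hr.one_sub.isSelfAdjoint hx |>.mp (h_comm hrx)))
    (by rw [mul_add, hr', ← mul_assoc, hr.mul_one_sub_self, zero_mul, add_zero])
  have h_x : r * ((1 - r) + r * x) + (1 - r) * (r + (1 - r) * x) = x := by
    linear_combination (norm := noncomm_ring) 2 * hr' * x - 2 * hr'
  rw [← h_x]
  refine map_mem_closure₂ (f := fun b c ↦ r * b + (1 - r) * c) (by fun_prop) h_near₁ h_near₂ ?_
  rintro b ⟨hb, hb_unit, hrb⟩ c ⟨hc, hc_unit, hrc⟩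
  replace hrb : Commute r b := by
    simpa only [sub_sub_cancel] using (Commute.one_left b).sub_left hrb
  exact ⟨(IsSelfAdjoint.commute_iff hr.isSelfAdjoint hb |>.mp hrb).add
      (IsSelfAdjoint.commute_iff hr.one_sub.isSelfAdjoint hc |>.mp (h_comm hrc)),
    isUnit_add_of_commute hr.isIdempotentElem hb_unit hc_unit hrb hrc,
    ((Commute.refl r).mul_right hrb).add_right
      (((Commute.one_right r).sub_right (Commute.refl r)).mul_right hrc)⟩

end RealRankZero

section SpectralProjection

/-- The spectral projection of a self-adjoint element `s` for the interval `(0, ∞)`. It is only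
meaningful when `s` is invertible: otherwise the indicator function need not be continuous on the
spectrum, and the continuous functional calculus returns `0`. -/
noncomputable def posProj (s : A) : A :=
  cfc (fun x : ℝ ↦ if 0 < x then 1 else 0) s

lemma continuousOn_indicator_pos :
    ContinuousOn (fun x : ℝ ↦ if 0 < x then (1 : ℝ) else 0) {0}ᶜ := by
  intro x hx
  rcases lt_or_gt_of_ne hx with hx | hx
  · exact (continuousAt_const.congr ((eventually_lt_nhds hx).mono fun y hy ↦
      (if_neg hy.not_gt).symm)).continuousWithinAt
  · exact (continuousAt_const.congr ((eventually_gt_nhds hx).mono fun y hy ↦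
      (if_pos hy).symm)).continuousWithinAt

lemma continuousOn_indicator_pos_spectrum {s : A} (hs : IsUnit s) :
    ContinuousOn (fun x : ℝ ↦ if 0 < x then (1 : ℝ) else 0) (spectrum ℝ s) :=
  continuousOn_indicator_pos.mono fun _ hx hx₀ ↦ spectrum.zero_notMem ℝ hs (hx₀ ▸ hx)

lemma isStarProjection_posProj {s : A} (hs : IsUnit s) : IsStarProjection (posProj s) where
  isIdempotentElem := by
    have := continuousOn_indicator_pos_spectrum hs
    rw [IsIdempotentElem, posProj, ← cfc_mul _ _ s]
    congr! 2
    split_ifs <;> norm_num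
  isSelfAdjoint := cfc_predicate _ _

lemma posProj_mem {S : StarSubalgebra ℂ A} (hS : IsClosed (S : Set A)) {s : A} (hs : s ∈ S) :
    posProj s ∈ S :=
  cfc_mem (𝕜' := ℂ) (hs := hS) _ hs

lemma posProj_two_mul_sub_one {q : A} (hq : IsStarProjection q) : posProj (2 * q - 1) = q := by
  have hq_sa := hq.isSelfAdjoint
  have h_finite : (spectrum ℝ q).Finite :=
    (Set.toFinite {0, 1}).subset (hq.isIdempotentElem.spectrum_subset ℝ)
  have h_reflection : 2 * q - 1 = cfc (fun x : ℝ ↦ 2 * x - 1) q := by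
    rw [cfc_sub .., cfc_const_mul .., cfc_id' ℝ q, cfc_const_one ℝ q, ofNat_smul_eq_nsmul,
      two_nsmul, two_mul]
  rw [h_reflection, posProj, ← cfc_comp' _ _ q ((h_finite.image _).continuousOn _)]
  conv_rhs => rw [← cfc_id' ℝ q]
  refine cfc_congr fun x hx ↦ ?_
  rcases hq.isIdempotentElem.spectrum_subset ℝ hx with rfl | rfl <;> norm_num

lemma posProj_mul_self_nonneg {s : A} (hs : IsSelfAdjoint s) (hs_unit : IsUnit s) :
    0 ≤ posProj s * s := by
  have := continuousOn_indicator_pos_spectrum hs_unit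
  have h_cfc : posProj s * s = cfc (fun x : ℝ ↦ (if 0 < x then 1 else 0) * x) s := by
    rw [cfc_mul _ _ s, cfc_id' ℝ s, posProj]
  rw [h_cfc]
  refine cfc_nonneg fun x _ ↦ ?_
  split_ifs with hx <;> simp [le_of_lt, *]

lemma one_sub_posProj_mul_self_nonpos {s : A} (hs : IsSelfAdjoint s) (hs_unit : IsUnit s) :
    (1 - posProj s) * s ≤ 0 := by
  have := continuousOn_indicator_pos_spectrum hs_unit
  have h_cfc : (1 - posProj s) * s = cfc (fun x : ℝ ↦ (1 - if 0 < x then 1 else 0) * x) s := by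
    rw [cfc_mul _ _ s, cfc_sub _ _ s, cfc_const_one ℝ s, cfc_id' ℝ s, posProj]
  rw [h_cfc]
  refine cfc_nonpos _ _ fun x _ ↦ ?_
  split_ifs with hx
  · simp
  · simpa using hx

lemma unitarilyIsotopic_posProj {X : Type*} [TopologicalSpace X] [PreconnectedSpace X]
    {S : StarSubalgebra ℂ A} (hS : IsClosed (S : Set A)) {s : X → A} (hs : Continuous s)
    (hs_sa : ∀ x, IsSelfAdjoint (s x)) (hs_unit : ∀ x, IsUnit (s x)) (hsS : ∀ x, s x ∈ S)
    (x y : X) : UnitarilyIsotopic S (posProj (s x)) (posProj (s y)) := by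
  refine unitarilyIsotopic_of_continuous hS (P := fun x ↦ posProj (s x)) ?_
    (fun x ↦ isStarProjection_posProj (hs_unit x)) (fun x ↦ posProj_mem hS (hsS x)) x y
  have h_spectrum : (⋃ x, spectrum ℝ (s x)) ⊆ {0}ᶜ :=
    iUnion_subset fun x y hy hy₀ ↦ spectrum.zero_notMem ℝ (hs_unit x) (hy₀ ▸ hy)
  exact Continuous.cfc_of_mem_nhdsSet (s := {0}ᶜ) _
    (isOpen_compl_singleton.mem_nhdsSet.mpr h_spectrum) hs hs_sa continuousOn_indicator_pos

end SpectralProjection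

section RieszDecomposition

section

variable {f r : A}

lemma isStarProjection_unitary_conj (hr : IsStarProjection r) (g : unitary A) :
    IsStarProjection ((g : A) * r * star (g : A)) := by
  refine ⟨?_, hr.isSelfAdjoint.conjugate _⟩
  have hg : star (g : A) * g = 1 := Unitary.star_mul_self_of_mem g.2
  calc (g : A) * r * star (g : A) * (g * r * star (g : A))
      = (g : A) * r * (star (g : A) * g) * r * star (g : A) := by simp only [mul_assoc]
    _ = g * r * star (g : A) := by rw [hg, mul_one, mul_assoc (g : A), hr.isIdempotentElem.eq]

lemma mvnEquiv_unitary_conj (hr : IsStarProjection r) (g : unitary A) :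
    MvNEquiv r (g * r * star (g : A)) := by
  have hg : star (g : A) * g = 1 := Unitary.star_mul_self_of_mem g.2
  refine ⟨g * r, ?_, ?_⟩
  · rw [star_mul, hr.isSelfAdjoint.star_eq, mul_assoc, ← mul_assoc (star (g : A)), hg, one_mul,
      hr.isIdempotentElem.eq]
  · rw [star_mul, hr.isSelfAdjoint.star_eq, mul_assoc, ← mul_assoc r, hr.isIdempotentElem.eq,
      mul_assoc]

lemma mul_unitary_conj_eq_self (hf : IsSelfAdjoint f) (hfr : f * r = r) {g : unitary A}
    (hg : (g : A) ∈ commutant f) : f * (g * r * star (g : A)) = g * r * star (g : A) := by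
  rw [← mul_assoc, ← mul_assoc, (mem_commutant_iff hf).mp hg, mul_assoc (g : A), hfr]

end

namespace UnitarilyIsotopic

variable {S : StarSubalgebra ℂ A} {f r q : A}

lemma isStarProjection (h : UnitarilyIsotopic S r q) (hr : IsStarProjection r) :
    IsStarProjection q := by
  obtain ⟨g, -, -, rfl⟩ := h
  exact isStarProjection_unitary_conj hr g

lemma mvnEquiv (h : UnitarilyIsotopic S r q) (hr : IsStarProjection r) : MvNEquiv r q := by
  obtain ⟨g, -, -, rfl⟩ := h
  exact mvnEquiv_unitary_conj hr g

lemma mul_eq_self (h : UnitarilyIsotopic (commutant f) r q) (hf : IsSelfAdjoint f)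
    (hfr : f * r = r) : f * q = q := by
  obtain ⟨g, -, hg, rfl⟩ := h
  exact mul_unitary_conj_eq_self hf hfr hg

end UnitarilyIsotopic

lemma RealRankZero.exists_isUnit_compression (h : RealRankZero A) {f r c : A}
    (hf : IsSelfAdjoint f) (hr : IsStarProjection r) (hfr : f * r = r) (hc : IsSelfAdjoint c)
    (hc_sq : c * c = 1) (hcf : c ∈ commutant f) :
    ∃ s : I → A, Continuous s ∧ s 0 = c ∧ IsUnit (compression r (s 1)) ∧
      ∀ t, IsSelfAdjoint (s t) ∧ IsUnit (s t) ∧ s t ∈ commutant f := by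
  have hr' := hr.isIdempotentElem.eq
  have hrf : r * f = r := mul_eq_self_swap hf hr.isSelfAdjoint hfr
  have h_corner : Commute r (r * c * r) := by
    rw [commute_iff_eq, mul_assoc (r * c), hr', mul_assoc, ← mul_assoc r r, hr']
  obtain ⟨b, ⟨hb, hb_unit, hrb⟩, hb_dist⟩ := Metric.mem_closure_iff.mp
    (h.mem_closure_of_commute hr (hc.conjugate_self hr.isSelfAdjoint) h_corner) 1 one_pos
  set w : A := r * (b - c) * r
  have hw_sa : IsSelfAdjoint w := (hb.sub hc).conjugate_self hr.isSelfAdjoint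
  have hw_norm : ‖w‖ < 1 := by
    have hw : r * (b - c) * r = r * (b - r * c * r) * r := by
      linear_combination (norm := noncomm_ring) hr' * c * r * r + r * c * hr'
    calc ‖w‖ = ‖r * (b - r * c * r) * r‖ := congrArg norm hw
      _ ≤ ‖r‖ * ‖b - r * c * r‖ * ‖r‖ := norm_mul₃_le
      _ ≤ 1 * ‖b - r * c * r‖ * 1 := by gcongr <;> exact hr.norm_le
      _ < 1 := by rwa [one_mul, mul_one, ← dist_eq_norm, dist_comm]
  have hw_mem : w ∈ commutant f := by
    rw [mem_commutant_iff hf, mul_assoc _ r f, hrf, ← mul_assoc, ← mul_assoc, hfr]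
  have hc_unit : IsUnit c := isUnit_iff_exists.mpr ⟨c, hc_sq, hc_sq⟩
  have hc_unitary : c ∈ unitary A := Unitary.mem_iff.mpr (by rw [hc.star_eq]; exact ⟨hc_sq, hc_sq⟩)
  refine ⟨fun t ↦ c + (t : ℝ) • w, by fun_prop, by simp, ?_, fun t ↦
    ⟨hc.add ((IsSelfAdjoint.all (t : ℝ)).smul hw_sa), ?_,
      add_mem hcf ((commutant f).smul_mem hw_mem (t : ℂ))⟩⟩
  · have hrw : r * w * r = w := by
      simp only [w, mul_assoc, hr']
      rw [← mul_assoc r r, hr']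
    have hrb' : r * b * r = r * b := by rw [mul_assoc, ← hrb.eq, ← mul_assoc, hr']
    have h_compression : compression r (c + w) = r * b + (1 - r) * 1 := by
      rw [compression, mul_add, add_mul, hrw, ← hrb']
      simp only [w]
      noncomm_ring
    simpa only [Icc.coe_one, one_smul, h_compression] using
      isUnit_add_of_commute hr.isIdempotentElem hb_unit isUnit_one hrb (.one_right r)
  · rw [← hc_unit.mul_left_iff]
    refine isUnit_of_norm_sub_one_lt ?_
    rw [mul_add, hc_sq, add_sub_cancel_left, CStarRing.norm_mem_unitary_mul _ hc_unitary, norm_smul,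
      Real.norm_of_nonneg t.2.1]
    exact (mul_le_of_le_one_left (norm_nonneg _) t.2.2).trans_lt hw_norm

lemma RealRankZero.exists_unitarilyIsotopic_commute (h : RealRankZero A) {f r q : A}
    (hf : IsSelfAdjoint f) (hr : IsStarProjection r) (hq : IsStarProjection q)
    (hfr : f * r = r) (hfq : f * q = q) :
    ∃ q', UnitarilyIsotopic (commutant f) q q' ∧ Commute r q' := by
  set S := commutant f
  have hS : IsClosed (S : Set A) := isClosed_commutant f
  have mem_of_mul_eq {x : A} (hx : IsSelfAdjoint x) (hfx : f * x = x) : x ∈ S :=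
    (mem_commutant_iff hf).mpr (by rw [hfx, mul_eq_self_swap hf hx hfx])
  have hσS : 2 * q - 1 ∈ S :=
    sub_mem (mul_mem (ofNat_mem S 2) (mem_of_mul_eq hq.isSelfAdjoint hfq)) (one_mem S)
  have hσ_sa : IsSelfAdjoint (2 * q - 1) := by
    simp [isSelfAdjoint_iff, two_mul, hq.isSelfAdjoint.star_eq]
  have hσ_sq : (2 * q - 1) * (2 * q - 1) = 1 := by
    linear_combination (norm := noncomm_ring) 4 * hq.isIdempotentElem.eq
  obtain ⟨s, hs, hs₀, he, hs'⟩ := h.exists_isUnit_compression hf hr hfr hσ_sa hσ_sq hσS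
  have h_first : UnitarilyIsotopic S q (posProj (s 1)) := by
    simpa only [hs₀, posProj_two_mul_sub_one hq] using unitarilyIsotopic_posProj hS hs
      (fun t ↦ (hs' t).1) (fun t ↦ (hs' t).2.1) (fun t ↦ (hs' t).2.2) 0 1
  obtain ⟨ha, ha_unit, haS⟩ := hs' 1
  set a := s 1
  set d : I → A := fun t ↦ star (shear r a t) * a * shear r a t
  have h_shear (t : I) : shear r a t ∈ S := by
    have hrS := mem_of_mul_eq hr.isSelfAdjoint hfr
    exact sub_mem (one_mem S) (S.smul_mem (mul_mem (inverse_mem hS (compression_mem hrS haS))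
      (mul_mem (mul_mem hrS haS) (sub_mem (one_mem S) hrS))) (t : ℂ))
  have h_second : UnitarilyIsotopic S (posProj (d 0)) (posProj (d 1)) := by
    have h_shear_unit (t : I) := isUnit_shear hr a t
    have h_cont : Continuous fun t : I ↦ shear r a t :=
      (continuous_shear r a).comp continuous_subtype_val
    exact unitarilyIsotopic_posProj hS (by fun_prop) (fun t ↦ ha.conjugate' _)
      (fun t ↦ ((h_shear_unit t).star.mul ha_unit).mul (h_shear_unit t))
      (fun t ↦ mul_mem (mul_mem (star_mem (h_shear t)) haS) (h_shear t)) 0 1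
  have h_d₀ : d 0 = a := by simp [d, shear_zero]
  have h_comm : posProj (d 1) ∈ commutant r := posProj_mem (isClosed_commutant r)
    ((mem_commutant_iff hr.isSelfAdjoint).mpr (commute_conj_shear hr ha he))
  exact ⟨_, h_first.trans (h_d₀ ▸ h_second), (mem_commutant_iff hr.isSelfAdjoint).mp h_comm⟩

lemma isStarProjection_conj {a w : A} (ha : IsStarProjection a)
    (hw : IsStarProjection (star w * w)) (haw : Commute a (w * star w)) :
    IsStarProjection (star w * a * w) where
  isIdempotentElem := by
    have haw' : w * star w * a = a * (w * star w) := haw.eq.symm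
    calc star w * a * w * (star w * a * w) = star w * a * (w * star w * a) * w := by
          simp only [mul_assoc]
      _ = star w * (a * a) * (w * (star w * w)) := by rw [haw']; simp only [mul_assoc]
      _ = star w * a * w := by
        rw [ha.isIdempotentElem.eq, mul_projection_of_star_mul_self_eq hw rfl]
  isSelfAdjoint := ha.isSelfAdjoint.conjugate' w

lemma RealRankZero.exists_add_of_le_add (h : RealRankZero A) {x a b : A} (hx : IsStarProjection x)
    (ha : IsStarProjection a) (hb : IsStarProjection b) (hab : a * b = 0) (hle : MvNLE x (a + b)) :
    ∃ t t', IsStarProjection t ∧ IsStarProjection t' ∧ t + t' = x ∧ t * t' = 0 ∧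
      MvNLE t a ∧ MvNLE t' b := by
  obtain ⟨v, hvx, hv⟩ := hle
  have hf := ha.add hb hab
  have ha' := ha.isIdempotentElem.eq
  have hvv := isStarProjection_mul_star_self hx hvx
  obtain ⟨q, hvq, haq⟩ := h.exists_unitarilyIsotopic_commute hf.isSelfAdjoint ha hvv
    (by rw [add_mul, ha', mul_eq_zero_swap ha.isSelfAdjoint hb.isSelfAdjoint hab, add_zero])
    (by rw [← mul_assoc, hv])
  have hq := hvq.isStarProjection hvv
  have hfq := hvq.mul_eq_self hf.isSelfAdjoint (by rw [← mul_assoc, hv])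
  obtain ⟨w, hwx, hwq⟩ := MvNEquiv.trans hx.isIdempotentElem hq.isIdempotentElem ⟨v, hvx, rfl⟩
    (hvq.mvnEquiv hvv)
  have hqw : q * w = w := range_mul_of_mul_star_self_eq hx hwx hwq
  have hfw : (a + b) * w = w := by rw [← hqw, ← mul_assoc, hfq]
  have hbq : Commute b q := by
    have : Commute (a + b) q := by
      rw [commute_iff_eq, hfq, mul_eq_self_swap hf.isSelfAdjoint hq.isSelfAdjoint hfq]
    simpa only [add_sub_cancel_left] using this.sub_left haq
  have h_le {c : A} (hc : IsStarProjection c) : MvNLE (star w * c * w) c :=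
    ⟨c * w, by rw [star_mul, hc.isSelfAdjoint.star_eq, mul_assoc, ← mul_assoc c,
      hc.isIdempotentElem.eq, mul_assoc], by rw [← mul_assoc, hc.isIdempotentElem.eq]⟩
  subst hwx hwq
  refine ⟨star w * a * w, star w * b * w, isStarProjection_conj ha hx haq,
    isStarProjection_conj hb hx hbq, ?_, ?_, h_le ha, h_le hb⟩
  · rw [← add_mul, ← mul_add, mul_assoc, hfw]
  · calc star w * a * w * (star w * b * w) = star w * (a * (w * star w)) * b * w := by
          simp only [mul_assoc]
      _ = star w * w * star w * (a * b) * w := by rw [haq.eq]; simp only [mul_assoc]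
      _ = 0 := by rw [hab, mul_zero, zero_mul]

end RieszDecomposition

section Separativity

/-- The block diagonal matrix `a ⊕ b`. -/
def blockSum {R : Type*} [Zero R] (a b : R) : Matrix (Fin 2) (Fin 2) R :=
  !![a, 0; 0, b]

/-- The separativity condition for projections of `R` itself. A C⋆-algebra is separative when all
of its matrix algebras satisfy this condition. -/
def SeparativeCancellation (R : Type*) [NonUnitalNonAssocSemiring R] [StarRing R] : Prop :=
  ∀ p q : R, IsStarProjection p → IsStarProjection q →
    MvNEquiv (blockSum p p) (blockSum p q) → MvNEquiv (blockSum p q) (blockSum q q) → MvNEquiv p q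

lemma isIdempotentElem_blockSum {a b : A} (ha : IsIdempotentElem a) (hb : IsIdempotentElem b) :
    IsIdempotentElem (blockSum a b) := by
  simp [IsIdempotentElem, blockSum, ha.eq, hb.eq]

lemma mvnEquiv_blockSum {a b x y z w a' b' : A}
    (h₁ : star x * x + star z * z = a) (h₂ : star x * y + star z * w = 0)
    (h₃ : star y * y + star w * w = b) (h₄ : x * star x + y * star y = a')
    (h₅ : x * star z + y * star w = 0) (h₆ : z * star z + w * star w = b') :
    MvNEquiv (blockSum a b) (blockSum a' b') := by
  have h_star : star !![x, y; z, w] = !![star x, star z; star y, star w] := by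
    ext i j
    fin_cases i <;> fin_cases j <;> rfl
  have h₂' : star y * x + star w * z = 0 := by simpa using congrArg star h₂
  have h₅' : z * star x + w * star y = 0 := by simpa using congrArg star h₅
  refine ⟨!![x, y; z, w], ?_, ?_⟩
  · rw [h_star, Matrix.mul_fin_two, h₁, h₂, h₂', h₃, blockSum]
  · rw [h_star, Matrix.mul_fin_two, h₄, h₅, h₅', h₆, blockSum]

variable {a b c k x y : A}

lemma mvnEquiv_blockSum_comm (ha : IsStarProjection a) (hb : IsStarProjection b) :
    MvNEquiv (blockSum a b) (blockSum b a) := by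
  have ha' := ha.isIdempotentElem.eq
  have hb' := hb.isIdempotentElem.eq
  apply mvnEquiv_blockSum (x := 0) (y := b) (z := a) (w := 0) <;>
    simp [ha.isSelfAdjoint.star_eq, hb.isSelfAdjoint.star_eq, ha', hb']

lemma mvnEquiv_blockSum_absorb (hx : IsStarProjection x) (hy : IsStarProjection y)
    (hc : IsStarProjection c) (hcx : c * x = 0) (hkc : star k * k = c) (hyk : y * k = k) :
    MvNEquiv (blockSum x y) (blockSum (x + c) (y - k * star k)) := by
  have hk : k * c = k := mul_projection_of_star_mul_self_eq hc hkc
  have hxk : x * star k = 0 := by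
    rw [← hk, star_mul, hc.isSelfAdjoint.star_eq, ← mul_assoc,
      mul_eq_zero_swap hc.isSelfAdjoint hx.isSelfAdjoint hcx, zero_mul]
  have hd : IsStarProjection (y - k * star k) :=
    (isStarProjection_mul_star_self hc hkc).sub_of_mul_eq_right hy (by rw [← mul_assoc, hyk])
  have hky : star k * y = star k := by
    simpa only [star_mul, hy.isSelfAdjoint.star_eq] using congrArg star hyk
  have hkd : star k * (y - k * star k) = 0 := by
    rw [mul_sub, hky, ← mul_assoc, hkc, ← hk, star_mul, hc.isSelfAdjoint.star_eq, ← mul_assoc,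
      hc.isIdempotentElem.eq, sub_self]
  apply mvnEquiv_blockSum (x := x) (y := star k) (z := 0) (w := y - k * star k) <;>
    simp only [hx.isSelfAdjoint.star_eq, hd.isSelfAdjoint.star_eq, hx.isIdempotentElem.eq,
      hd.isIdempotentElem.eq, star_star, hxk, hkd, hkc, star_zero, mul_zero, zero_mul, add_zero,
      zero_add, add_sub_cancel]

lemma mvnEquiv_blockSum_of_add (hx : IsStarProjection x) (hy : IsStarProjection y)
    (hc : IsStarProjection c) (hcx : c * x = 0) (hcy : c * y = 0) (h : MvNEquiv (x + c) (y + c))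
    (hle : MvNLE c x) : MvNEquiv (blockSum x x) (blockSum y x) := by
  obtain ⟨k, hkc, hxk⟩ := hle
  obtain ⟨m, hm₁, hm₂⟩ := h
  have hd : IsStarProjection (x - k * star k) :=
    (isStarProjection_mul_star_self hc hkc).sub_of_mul_eq_right hx (by rw [← mul_assoc, hxk])
  have hx' := hx.isIdempotentElem
  have h_cancel :
      MvNEquiv (blockSum (x + c) (x - k * star k)) (blockSum (y + c) (x - k * star k)) := by
    apply mvnEquiv_blockSum (x := m) (y := 0) (z := 0) (w := x - k * star k) <;>
      simp only [hd.isSelfAdjoint.star_eq, hd.isIdempotentElem.eq, hm₁, hm₂, star_zero, mul_zero,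
        zero_mul, add_zero, zero_add]
  have h_id := isIdempotentElem_blockSum hx' hx'
  have h_id' := isIdempotentElem_blockSum
    (hy.add hc (mul_eq_zero_swap hc.isSelfAdjoint hy.isSelfAdjoint hcy)).isIdempotentElem
    hd.isIdempotentElem
  exact ((mvnEquiv_blockSum_absorb hx hx hc hcx hkc hxk).trans h_id h_id' h_cancel).trans h_id
    (isIdempotentElem_blockSum hy.isIdempotentElem hx')
    (mvnEquiv_blockSum_absorb hy hx hc hcy hkc hxk).symm

lemma SeparativeCancellation.cancel (h : SeparativeCancellation A) (hx : IsStarProjection x)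
    (hy : IsStarProjection y) (hc : IsStarProjection c) (hcx : c * x = 0) (hcy : c * y = 0)
    (hxy : MvNEquiv (x + c) (y + c)) (hle : MvNLE c x) (hle' : MvNLE c y) : MvNEquiv x y := by
  have h_first := mvnEquiv_blockSum_of_add hx hy hc hcx hcy hxy hle
  have h_second := mvnEquiv_blockSum_of_add hy hx hc hcy hcx hxy.symm hle'
  have hx' := hx.isIdempotentElem
  have h_first' := h_first.trans (isIdempotentElem_blockSum hx' hx')
    (isIdempotentElem_blockSum hx' hy.isIdempotentElem) (mvnEquiv_blockSum_comm hy hx)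
  exact h x y hx hy h_first' h_second.symm

end Separativity

section CancellationIsotopy

lemma mul_eq_zero_of_mul_eq_self {a a' b b' : A} (ha : IsSelfAdjoint a) (ha' : IsSelfAdjoint a')
    (hab : a * b = 0) (haa' : a * a' = a') (hbb' : b * b' = b') : a' * b' = 0 := by
  rw [← mul_eq_self_swap ha ha' haa', ← hbb', mul_assoc, ← mul_assoc a, hab, zero_mul, mul_zero]

lemma SeparativeCancellation.unitarilyIsotopic (h : SeparativeCancellation A) {f x y c : A}
    (hf : IsSelfAdjoint f) (hx : IsStarProjection x) (hy : IsStarProjection y)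
    (hc : IsStarProjection c) (hfx : f * x = x) (hfy : f * y = y) (hxy : x * y = 0)
    (hcx : c * x = 0) (hcy : c * y = 0) (h_add : MvNEquiv (x + c) (y + c)) (hle : MvNLE c x)
    (hle' : MvNLE c y) : UnitarilyIsotopic (commutant f) (x + c) (y + c) :=
  .add_of_mul_eq_zero hx hy hxy (h.cancel hx hy hc hcx hcy h_add hle hle') hf hfx hfy
    hc.isSelfAdjoint hcx hcy

lemma RealRankZero.exists_add_mvnEquiv (h : RealRankZero A) {r r₁ q₁ s : A}
    (hr : IsStarProjection r) (hr₁ : IsStarProjection r₁) (hq₁ : IsStarProjection q₁)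
    (hs : IsStarProjection s) (hsr₁ : s * r₁ = 0) (hsq₁ : s * q₁ = 0)
    (hle : MvNLE r (s + q₁)) (hle' : MvNLE r (s + r₁)) :
    ∃ t t' c, IsStarProjection t ∧ IsStarProjection t' ∧ IsStarProjection c ∧ t + c = r ∧
      t * c = 0 ∧ s * t' = t' ∧ MvNEquiv t t' ∧ MvNLE c (t' + r₁) ∧ MvNLE c q₁ := by
  obtain ⟨d, e, hd, he, hder, hde, ⟨v, hvd, hsv⟩, heq₁⟩ := h.exists_add_of_le_add hr hs hq₁ hsq₁ hle
  have hre : r * e = e := by rw [← hder, add_mul, hde, he.isIdempotentElem.eq, zero_add]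
  have ha := isStarProjection_mul_star_self hd hvd
  set a : A := v * star v with ha_def
  have hsa : s * a = a := by rw [ha_def, ← mul_assoc, hsv]
  have has : a * s = a := mul_eq_self_swap hs.isSelfAdjoint ha.isSelfAdjoint hsa
  have haa := ha.isIdempotentElem.eq
  have har₁ : a * r₁ = 0 := by rw [← has, mul_assoc, hsr₁, mul_zero]
  have hr₁a : r₁ * a = 0 := mul_eq_zero_swap ha.isSelfAdjoint hr₁.isSelfAdjoint har₁
  have hr₁s : r₁ * s = 0 := mul_eq_zero_swap hs.isSelfAdjoint hr₁.isSelfAdjoint hsr₁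
  obtain ⟨c, g, hc, hg, hcge, hcg, hcle, w, hwg, hsaw⟩ := h.exists_add_of_le_add he
    (ha.add hr₁ har₁) (ha.sub_of_mul_eq_right hs hsa)
    (by rw [add_mul, mul_sub, mul_sub, has, haa, hr₁s, hr₁a, sub_self, sub_self, add_zero])
    (by rw [show a + r₁ + (s - a) = s + r₁ by abel]; exact hle'.mono_left he hre)
  have hb := isStarProjection_mul_star_self hg hwg
  have hsab : (s - a) * (w * star w) = w * star w := by rw [← mul_assoc, hsaw]
  set b : A := w * star w
  have hab : a * b = 0 := by rw [← hsab, ← mul_assoc, mul_sub, has, haa, sub_self, zero_mul]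
  have hsb : s * b = b := by simpa only [sub_mul, hab, sub_zero] using hsab
  have hec : e * c = c := by
    rw [← hcge, add_mul, hc.isIdempotentElem.eq,
      mul_eq_zero_swap hc.isSelfAdjoint hg.isSelfAdjoint hcg, add_zero]
  have heg : e * g = g := by rw [← hcge, add_mul, hcg, hg.isIdempotentElem.eq, zero_add]
  have hdg : d * g = 0 := by rw [← heg, ← mul_assoc, hde, zero_mul]
  have hba : b * a = 0 := mul_eq_zero_swap ha.isSelfAdjoint hb.isSelfAdjoint hab
  refine ⟨d + g, a + b, c, hd.add hg hdg, ha.add hb hab, hc, ?_, ?_, ?_, ?_, ?_,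
    heq₁.mono_left hc hec⟩
  · rw [← hder, ← hcge]; abel
  · rw [add_mul, mul_eq_zero_swap hc.isSelfAdjoint hg.isSelfAdjoint hcg, ← hec, ← mul_assoc, hde,
      zero_mul, add_zero]
  · rw [mul_add, hsa, hsb]
  · exact .add hd hg ha.isSelfAdjoint hdg hab ⟨v, hvd, rfl⟩ ⟨w, hwg, rfl⟩
  · refine hcle.mono_right ?_
    have hbr₁ : b * r₁ = 0 := by
      rw [← mul_eq_self_swap hs.isSelfAdjoint hb.isSelfAdjoint hsb, mul_assoc, hsr₁, mul_zero]
    simp only [add_mul, mul_add, haa, hba, hr₁a, har₁, hbr₁, hr₁.isIdempotentElem.eq, add_zero,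
      zero_add]

lemma RealRankZero.unitarilyIsotopic_add_of_mul_eq_zero (h : RealRankZero A)
    (h_sep : SeparativeCancellation A) {f z r₁ q₁ s : A} (hf : IsSelfAdjoint f)
    (hz : IsStarProjection z) (hr₁ : IsStarProjection r₁) (hq₁ : IsStarProjection q₁)
    (hs : IsStarProjection s) (hfz : f * z = z) (hfr₁ : f * r₁ = r₁) (hfq₁ : f * q₁ = q₁)
    (hfs : f * s = s) (hzr₁ : z * r₁ = 0) (hzq₁ : z * q₁ = 0) (hsz : s * z = 0) (hrq₁ : r₁ * q₁ = 0)
    (hsr₁ : s * r₁ = 0) (hsq₁ : s * q₁ = 0) (h_equiv : MvNEquiv (z + r₁) (z + q₁))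
    (hle : MvNLE z (s + q₁)) (hle' : MvNLE z (s + r₁)) :
    UnitarilyIsotopic (commutant f) (z + r₁) (z + q₁) := by
  obtain ⟨t, t', c, ht, ht', hc, htcz, htc, hst', htt', hct', hcq₁⟩ :=
    h.exists_add_mvnEquiv hz hr₁ hq₁ hs hsr₁ hsq₁ hle hle'
  have hct : c * t = 0 := mul_eq_zero_swap ht.isSelfAdjoint hc.isSelfAdjoint htc
  have hzt : z * t = t := by rw [← htcz, add_mul, hct, add_zero, ht.isIdempotentElem.eq]
  have hzc : z * c = c := by rw [← htcz, add_mul, htc, zero_add, hc.isIdempotentElem.eq]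
  have hft : f * t = t := by rw [← hzt, ← mul_assoc, hfz]
  have hft' : f * t' = t' := by rw [← hst', ← mul_assoc, hfs]
  have orth {x y a b : A} (hx : IsSelfAdjoint x) (ha : IsStarProjection a) (hb : IsStarProjection b)
      (hxy : x * y = 0) (hxa : x * a = a) (hyb : y * b = b) : a * b = 0 ∧ b * a = 0 :=
    have hab := mul_eq_zero_of_mul_eq_self hx ha.isSelfAdjoint hxy hxa hyb
    ⟨hab, mul_eq_zero_swap ha.isSelfAdjoint hb.isSelfAdjoint hab⟩
  have htt'_orth := orth hs.isSelfAdjoint ht' ht hsz hst' hzt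
  have ht'c := orth hs.isSelfAdjoint ht' hc hsz hst' hzc
  have ht'r₁ := orth hs.isSelfAdjoint ht' hr₁ hsr₁ hst' hr₁.isIdempotentElem
  have ht'q₁ := orth hs.isSelfAdjoint ht' hq₁ hsq₁ hst' hq₁.isIdempotentElem
  have htr₁ := orth hz.isSelfAdjoint ht hr₁ hzr₁ hzt hr₁.isIdempotentElem
  have htq₁ := orth hz.isSelfAdjoint ht hq₁ hzq₁ hzt hq₁.isIdempotentElem
  have hcr₁ := orth hz.isSelfAdjoint hc hr₁ hzr₁ hzc hr₁.isIdempotentElem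
  have hcq₁' := orth hz.isSelfAdjoint hc hq₁ hzq₁ hzc hq₁.isIdempotentElem
  have h_swap : UnitarilyIsotopic (commutant f) (z + r₁) (t' + r₁ + c) := by
    rw [← htcz, add_assoc, add_assoc, add_comm r₁]
    exact .add_of_mul_eq_zero ht ht' htt'_orth.2 htt' hf hft hft'
      (hc.isSelfAdjoint.add hr₁.isSelfAdjoint) (by rw [add_mul, hct, htr₁.2, add_zero])
      (by rw [add_mul, ht'c.2, ht'r₁.2, add_zero])
  have h_target : z + q₁ = t + q₁ + c := by rw [← htcz]; abel
  have h_equiv' : MvNEquiv (t' + r₁ + c) (z + q₁) :=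
    have hzr := hz.add hr₁ hzr₁
    (h_swap.mvnEquiv hzr).symm.trans (h_swap.isStarProjection hzr).isIdempotentElem
      (hz.add hq₁ hzq₁).isIdempotentElem h_equiv
  rw [h_target] at h_equiv' ⊢
  refine h_swap.trans (h_sep.unitarilyIsotopic hf (ht'.add hr₁ ht'r₁.1) (ht.add hq₁ htq₁.1) hc
    ?_ ?_ ?_ ?_ ?_ h_equiv' hct' (hcq₁.mono_right ?_))
  all_goals simp [mul_add, add_mul, hq₁.isIdempotentElem.eq, *]

variable {f r q : A}

lemma RealRankZero.unitarilyIsotopic_of_commute (h : RealRankZero A)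
    (h_sep : SeparativeCancellation A) (hf : IsStarProjection f) (hr : IsStarProjection r)
    (hq : IsStarProjection q) (hfr : f * r = r) (hfq : f * q = q) (hrq : Commute r q)
    (h_equiv : MvNEquiv r q) (hle : MvNLE r (f - r)) (hle' : MvNLE q (f - q)) :
    UnitarilyIsotopic (commutant f) r q := by
  have hr' := hr.isIdempotentElem.eq
  have hq' := hq.isIdempotentElem.eq
  have hqr : q * r = r * q := hrq.eq.symm
  have hz : IsStarProjection (r * q) := hr.mul hq hrq
  have hzr : r * q * r = r * q := by rw [mul_assoc, hqr, ← mul_assoc, hr']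
  have hzq : r * q * q = r * q := by rw [mul_assoc, hq']
  have hrz : r * (r * q) = r * q := by rw [← mul_assoc, hr']
  have hqz : q * (r * q) = r * q := by rw [← hqr, ← mul_assoc, hq']
  have hfz : f * (r * q) = r * q := by rw [← mul_assoc, hfr]
  have hj : f * (r + q - r * q) = r + q - r * q := by simp only [mul_add, mul_sub, hfr, hfq, hfz]
  have h_isotopic := h.unitarilyIsotopic_add_of_mul_eq_zero h_sep (f := f) (r₁ := r - r * q)
    (q₁ := q - r * q) (s := f - (r + q - r * q)) hf.isSelfAdjoint hz (hz.sub_of_mul_eq_left hr hzr)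
    (hz.sub_of_mul_eq_left hq hzq)
    ((IsStarProjection.add_sub_mul_of_commute hrq hr hq).sub_of_mul_eq_right hf hj)
  simp only [add_sub_cancel] at h_isotopic
  refine h_isotopic hfz ?_ ?_ ?_ ?_ ?_ ?_ ?_ ?_ ?_ h_equiv ?_ ?_
  case refine_10 =>
    rw [show f - (r + q - r * q) + (q - r * q) = f - r by abel]
    exact hle.mono_left hz hrz
  case refine_11 =>
    rw [show f - (r + q - r * q) + (r - r * q) = f - q by abel]
    exact hle'.mono_left hz hqz
  all_goals
    simp only [mul_sub, sub_mul, add_mul, hf.isIdempotentElem.eq, hz.isIdempotentElem.eq, *]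
    try abel

lemma MvNLE.conj {a b : A} (h : MvNLE a b) (g : unitary A) :
    MvNLE ((g : A) * a * star (g : A)) (g * b * star (g : A)) := by
  obtain ⟨v, hva, hvb⟩ := h
  have hg (x : A) : star (g : A) * (g * x) = x := by
    rw [← mul_assoc, Unitary.star_mul_self_of_mem g.2, one_mul]
  refine ⟨g * v * star (g : A), ?_, ?_⟩
  · simp only [star_mul, star_star, mul_assoc, hg, ← hva]
  · simp only [mul_assoc, hg]
    rw [← mul_assoc b, hvb]

lemma RealRankZero.unitarilyIsotopic_of_mvnEquiv (h : RealRankZero A)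
    (h_sep : SeparativeCancellation A) (hf : IsStarProjection f) (hr : IsStarProjection r)
    (hq : IsStarProjection q) (hfr : f * r = r) (hfq : f * q = q)
    (h_equiv : MvNEquiv r q) (hle : MvNLE r (f - r)) (hle' : MvNLE q (f - q)) :
    UnitarilyIsotopic (commutant f) r q := by
  obtain ⟨q', hqq', hrq'⟩ := h.exists_unitarilyIsotopic_commute hf.isSelfAdjoint hr hq hfr hfq
  have hq' := hqq'.isStarProjection hq
  have hfq' := hqq'.mul_eq_self hf.isSelfAdjoint hfq
  have h_equiv' := h_equiv.trans hr.isIdempotentElem hq'.isIdempotentElem (hqq'.mvnEquiv hq)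
  refine .trans ?_ hqq'.symm
  refine h.unitarilyIsotopic_of_commute h_sep hf hr hq' hfr hfq' hrq' h_equiv' hle ?_
  obtain ⟨g, -, hg, rfl⟩ := hqq'
  have hgf : (g : A) * f * star (g : A) = f := by
    rw [← (mem_commutant_iff hf.isSelfAdjoint).mp hg, mul_assoc, Unitary.mul_star_self_of_mem g.2,
      mul_one]
  simpa only [mul_sub, sub_mul, hgf] using hle'.conj g

end CancellationIsotopy

section SpectralCut

lemma conjugate_mul_of_commute {f q s : A} (hq : IsIdempotentElem q) (hfq : Commute f q)
    (hqs : Commute q s) : f * q * s * (f * q) = f * (q * s) * f := by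
  calc f * q * s * (f * q) = f * (q * s * q) * f := by
        rw [hfq.eq]; nth_rewrite 1 [← hfq.eq]; simp only [mul_assoc]
    _ = f * (q * s) * f := by rw [mul_assoc q, ← hqs.eq, ← mul_assoc q, hq.eq]

lemma smul_le_conjugate_of_norm_sub_le {r s x : A} (hr : IsStarProjection r)
    (hs : IsSelfAdjoint s) (hx : IsSelfAdjoint x) {γ η : ℝ} (hrs : 0 ≤ r * s * r)
    (h_norm : ‖x - γ • 1 - s‖ ≤ η) : (γ - η) • r ≤ r * x * r := by
  set e : A := x - γ • 1 - s with he
  have he_sa : IsSelfAdjoint e := (hx.sub ((IsSelfAdjoint.all γ).smul (.one A))).sub hs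
  have he_norm : algebraMap ℝ A ‖e‖ ≤ η • (1 : A) := by
    rw [Algebra.algebraMap_eq_smul_one]
    exact smul_le_smul_of_nonneg_right h_norm zero_le_one
  have h_lower : 0 ≤ η • (1 : A) + e :=
    neg_le_iff_add_nonneg'.mp ((neg_le_neg he_norm).trans he_sa.neg_algebraMap_norm_le_self)
  have hx_eq : x = s + γ • 1 + e := by rw [he]; abel
  have h_sum := add_nonneg hrs (conjugate_nonneg_of_nonneg h_lower hr.nonneg)
  rw [← sub_nonneg]
  convert h_sum using 1
  simp only [hx_eq, mul_add, add_mul, mul_smul_comm, smul_mul_assoc, mul_one,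
    hr.isIdempotentElem.eq]
  module

lemma RealRankZero.exists_spectral_cut (h : RealRankZero A) {f x : A} (hf : IsStarProjection f)
    (hx : IsSelfAdjoint x) (hfx : Commute f x) {α β : ℝ} (hαβ : α < β) :
    ∃ r, IsStarProjection r ∧ f * r = r ∧ α • r ≤ r * x * r ∧
      (f - r) * x * (f - r) ≤ β • (f - r) := by
  set γ : ℝ := (α + β) / 2
  set η : ℝ := (β - α) / 2
  obtain ⟨s, ⟨hs, hs_unit, hfs⟩, hs_dist⟩ := Metric.mem_closure_iff.mp
    (h.mem_closure_of_commute hf (hx.sub ((IsSelfAdjoint.all γ).smul (.one A)))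
      (hfx.sub_right ((Commute.one_right f).smul_right γ))) η (half_pos (sub_pos.mpr hαβ))
  have h_norm : ‖x - γ • 1 - s‖ ≤ η := by rw [← dist_eq_norm]; exact hs_dist.le
  set P := posProj s
  have hP := isStarProjection_posProj hs_unit
  have hfP : Commute f P := (mem_commutant_iff hf.isSelfAdjoint).mp
    (posProj_mem (isClosed_commutant f) ((mem_commutant_iff hf.isSelfAdjoint).mpr hfs))
  have h_pos : 0 ≤ P * s := posProj_mul_self_nonneg hs hs_unit
  have h_neg : (1 - P) * s ≤ 0 := one_sub_posProj_mul_self_nonpos hs hs_unit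
  have hPs : Commute P s :=
    IsSelfAdjoint.commute_iff hP.isSelfAdjoint hs |>.mpr h_pos.isSelfAdjoint
  have hr : IsStarProjection (f * P) := hf.mul hP hfP
  have hfr : f * (f * P) = f * P := by rw [← mul_assoc, hf.isIdempotentElem.eq]
  refine ⟨f * P, hr, hfr, ?_, ?_⟩
  · have h_cut : 0 ≤ f * P * s * (f * P) := by
      rw [conjugate_mul_of_commute hP.isIdempotentElem hfP hPs]
      exact conjugate_nonneg_of_nonneg h_pos hf.nonneg
    convert smul_le_conjugate_of_norm_sub_le hr hs hx h_cut h_norm using 2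
    ring
  · have h_cut : 0 ≤ (f - f * P) * -s * (f - f * P) := by
      rw [← mul_one_sub, conjugate_mul_of_commute hP.one_sub.isIdempotentElem
        ((Commute.one_right f).sub_right hfP) ((Commute.one_left s).sub_left hPs).neg_right,
        mul_neg]
      exact conjugate_nonneg_of_nonneg (neg_nonneg.mpr h_neg) hf.nonneg
    have h_norm' : ‖-x - (-γ) • 1 - -s‖ ≤ η := by
      rwa [← norm_neg, show -(-x - (-γ) • 1 - -s) = x - γ • 1 - s by module]
    have h_le := smul_le_conjugate_of_norm_sub_le (hr.sub_of_mul_eq_right hf hfr) hs.neg hx.neg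
      h_cut h_norm'
    rw [mul_neg, neg_mul, le_neg, ← neg_smul] at h_le
    convert h_le using 2
    ring

lemma mvnLE_of_smul_le {p r w : A} (hp : IsSelfAdjoint p) (hr : IsStarProjection r)
    (hrw : r * w = w) (hwp : w * p = w) {η : ℝ} (hη : 0 < η) (h_le : η • r ≤ w * star w) :
    MvNLE r p := by
  set G : A := w * star w + (1 - r)
  have h_star : star w * r = star w := by
    simpa only [star_mul, hr.isSelfAdjoint.star_eq] using congrArg star hrw
  have hrG : r * G = w * star w := by
    rw [mul_add, hr.mul_one_sub_self, add_zero, ← mul_assoc, hrw]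
  have hGr : G * r = w * star w := by
    rw [add_mul, hr.one_sub_mul_self, add_zero, mul_assoc, h_star]
  have hG : IsStrictlyPositive G := by
    set δ : ℝ := min 1 η
    have hδ : 0 < δ := lt_min one_pos hη
    refine (isStrictlyPositive_algebraMap hδ).of_le ?_
    calc algebraMap ℝ A δ = δ • r + δ • (1 - r) := by
          rw [Algebra.algebraMap_eq_smul_one, ← smul_add, add_sub_cancel]
      _ ≤ η • r + (1 : ℝ) • (1 - r) := add_le_add
        (smul_le_smul_of_nonneg_right (min_le_right 1 η) hr.nonneg)
        (smul_le_smul_of_nonneg_right (min_le_left 1 η) hr.one_sub.nonneg)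
      _ ≤ G := by rw [one_smul]; exact add_le_add_left h_le _
  set k : A := G ^ (-(1 / 2) : ℝ)
  have hk : IsSelfAdjoint k := .of_nonneg CFC.rpow_nonneg
  have hkr : Commute k r := Commute.cfc_nnreal (hGr.trans hrG.symm) _
  refine ⟨star (k * w), ?_, ?_⟩
  · calc star (star (k * w)) * star (k * w) = k * (G * r) * k := by
          rw [star_star, star_mul, hk.star_eq, hGr]; simp only [mul_assoc]
      _ = k * G * k * r := by rw [mul_assoc k (G * r), mul_assoc G, ← hkr.eq]; simp only [mul_assoc]
      _ = r := by rw [CFC.conjugate_rpow_neg_one_half G, one_mul]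
  · nth_rewrite 2 [← hwp]
    rw [star_mul, star_mul, star_mul, hp.star_eq, mul_assoc]

lemma RealRankZero.exists_mvnLE_norm_le (h : RealRankZero A) {f p z : A} (hf : IsStarProjection f)
    (hp : IsStarProjection p) {ε : ℝ} (hε : 0 < ε) :
    ∃ r, IsStarProjection r ∧ f * r = r ∧ MvNLE r p ∧ ‖(f - r) * z * p‖ ≤ ε := by
  have hf' := hf.isIdempotentElem.eq
  have hp' := hp.isIdempotentElem.eq
  set x : A := f * z * p * star (f * z * p)
  have hx : IsSelfAdjoint x := .mul_star_self _
  have hfx : f * x = x := by simp only [x, ← mul_assoc, hf']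
  obtain ⟨r, hr, hfr, hrx, hqx⟩ := h.exists_spectral_cut hf hx
    (hfx.trans (mul_eq_self_swap hf.isSelfAdjoint hx hfx).symm) (half_lt_self (pow_pos hε 2))
  have hrf : r * f = r := mul_eq_self_swap hf.isSelfAdjoint hr.isSelfAdjoint hfr
  have conj_x {e : A} (he : IsSelfAdjoint e) (hef : e * f = e) :
      e * x * e = e * z * p * star (e * z * p) := by
    have : e * (f * z * p) = e * z * p := by simp only [← mul_assoc, hef]
    rw [← this, star_mul, he.star_eq]
    simp only [x, mul_assoc]
  have hq : IsStarProjection (f - r) := hr.sub_of_mul_eq_right hf hfr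
  rw [conj_x hr.isSelfAdjoint hrf] at hrx
  rw [conj_x hq.isSelfAdjoint (by rw [sub_mul, hf', hrf])] at hqx
  refine ⟨r, hr, hfr, mvnLE_of_smul_le (w := r * z * p) hp.isSelfAdjoint hr ?_ ?_
    (half_pos (pow_pos hε 2)) hrx, ?_⟩
  · simp only [← mul_assoc, hr.isIdempotentElem.eq]
  · rw [mul_assoc, hp']
  · have h_norm := CStarAlgebra.norm_le_norm_of_nonneg_of_le (mul_star_self_nonneg _) hqx
    rw [CStarRing.norm_self_mul_star, norm_smul, Real.norm_of_nonneg (by positivity)] at h_norm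
    have := mul_le_mul_of_nonneg_left hq.norm_le (sq_nonneg ε)
    exact abs_le_of_sq_le_sq' (by nlinarith) hε.le |>.2

end SpectralCut

section Tower

/-- `e` is obtained from the projection `p` by successively adding orthogonal projections that are
subequivalent to `p`. Cutting an element of the closed ideal generated by `p` down to such
projections approximates it, while separativity propagates one step at a time along the tower. -/
inductive IsTower (p : A) : A → Prop
  | base : IsTower p p
  | step (e r : A) (he : IsTower p e) (hr : IsStarProjection r) (her : e * r = 0)
      (hrp : MvNLE r p) : IsTower p (e + r)

namespace IsTower

variable {e p : A}

lemma isStarProjection (he : IsTower p e) (hp : IsStarProjection p) : IsStarProjection e := by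
  induction he with
  | base => exact hp
  | step e r _ hr her _ ih => exact ih.add hr her

lemma mul_base (he : IsTower p e) (hp : IsStarProjection p) : e * p = p := by
  induction he with
  | base => exact hp.isIdempotentElem.eq
  | step e r he hr her _ ih =>
    have hre : r * e = 0 :=
      mul_eq_zero_swap (he.isStarProjection hp).isSelfAdjoint hr.isSelfAdjoint her
    have hrp : r * p = 0 := by rw [← ih, ← mul_assoc, hre, zero_mul]
    rw [add_mul, ih, hrp, add_zero]

end IsTower

/-- `y` can be cut down, up to an arbitrarily small error, by projections above any given projection
in the tower over `p`. Starting from an arbitrary `e` makes the property additive in `y`. -/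
def TowerApproximable (p y : A) : Prop :=
  ∀ e, IsTower p e → ∀ ε > 0, ∃ e', IsTower p e' ∧ e' * e = e ∧ ‖(1 - e') * y‖ ≤ ε

lemma norm_mul_le_of_isStarProjection {e : A} (he : IsStarProjection e) (y : A) :
    ‖e * y‖ ≤ ‖y‖ :=
  (norm_mul_le _ _).trans (mul_le_of_le_one_left (norm_nonneg _) he.norm_le)

lemma norm_one_sub_mul_le_of_mul_eq {e e' : A} (he' : IsStarProjection e') (h : e' * e = e)
    (y : A) : ‖(1 - e') * y‖ ≤ ‖(1 - e) * y‖ := by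
  have h_mul : (1 - e') * (1 - e) = 1 - e' := by
    rw [mul_sub, mul_one, sub_mul, h, one_mul, sub_self, sub_zero]
  rw [← h_mul, mul_assoc]
  exact norm_mul_le_of_isStarProjection he'.one_sub _

lemma RealRankZero.towerApproximable_mul_mul (h : RealRankZero A) {p : A} (hp : IsStarProjection p)
    (a b : A) : TowerApproximable p (a * p * b) := by
  intro e he ε hε
  have hb : 0 < ‖b‖ + 1 := by positivity
  have he_proj := he.isStarProjection hp
  obtain ⟨r, hr, hr_le, hrp, hr_norm⟩ :=
    h.exists_mvnLE_norm_le he_proj.one_sub hp (z := a) (div_pos hε hb)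
  have her : e * r = 0 := by rw [← hr_le, ← mul_assoc, he_proj.mul_one_sub_self, zero_mul]
  refine ⟨e + r, .step e r he hr her hrp, ?_, ?_⟩
  · rw [add_mul, he_proj.isIdempotentElem.eq,
      mul_eq_zero_swap he_proj.isSelfAdjoint hr.isSelfAdjoint her, add_zero]
  · calc ‖(1 - (e + r)) * (a * p * b)‖ = ‖(1 - e - r) * a * p * b‖ := by
          rw [sub_sub]; simp only [mul_assoc]
      _ ≤ ‖(1 - e - r) * a * p‖ * ‖b‖ := norm_mul_le _ _
      _ ≤ ε / (‖b‖ + 1) * (‖b‖ + 1) := by gcongr; exact le_add_of_nonneg_right zero_le_one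
      _ = ε := div_mul_cancel₀ _ hb.ne'

namespace TowerApproximable

variable {p x y : A}

lemma add (hp : IsStarProjection p) (hx : TowerApproximable p x) (hy : TowerApproximable p y) :
    TowerApproximable p (x + y) := by
  intro e he ε hε
  obtain ⟨e₁, he₁, h₁, hx_norm⟩ := hx e he (ε / 2) (half_pos hε)
  obtain ⟨e₂, he₂, h₂, hy_norm⟩ := hy e₁ he₁ (ε / 2) (half_pos hε)
  refine ⟨e₂, he₂, by rw [← h₁, ← mul_assoc, h₂], ?_⟩
  rw [mul_add]
  linarith [norm_add_le ((1 - e₂) * x) ((1 - e₂) * y),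
    norm_one_sub_mul_le_of_mul_eq (he₂.isStarProjection hp) h₂ x]

lemma of_mem_closure (hp : IsStarProjection p) (hy : y ∈ closure {x | TowerApproximable p x}) :
    TowerApproximable p y := by
  intro e he ε hε
  obtain ⟨x, hx, hyx⟩ := Metric.mem_closure_iff.mp hy (ε / 2) (half_pos hε)
  rw [dist_eq_norm] at hyx
  obtain ⟨e', he', hee', hx_norm⟩ := hx e he (ε / 2) (half_pos hε)
  refine ⟨e', he', hee', ?_⟩
  have h_split : (1 - e') * y = (1 - e') * x + (1 - e') * (y - x) := by rw [mul_sub]; abel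
  rw [h_split]
  linarith [norm_add_le ((1 - e') * x) ((1 - e') * (y - x)),
    norm_mul_le_of_isStarProjection (he'.isStarProjection hp).one_sub (y - x)]

end TowerApproximable

end Tower

section ClosedIdeal

variable {p x y : A}

lemma span_singleton_induction {P : A → Prop} (zero : P 0) (add : ∀ x y, P x → P y → P (x + y))
    (neg : ∀ x, P x → P (-x)) (mul_mul : ∀ a b, P (a * p * b))
    (hy : y ∈ TwoSidedIdeal.span {p}) : P y := by
  rw [TwoSidedIdeal.mem_span_iff_mem_addSubgroup_closure] at hy
  induction hy using AddSubgroup.closure_induction with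
  | mem x hx =>
    obtain ⟨_, ⟨a, -, _, rfl, rfl⟩, b, -, rfl⟩ := hx
    exact mul_mul a b
  | zero => exact zero
  | add x y _ _ hx hy => exact add x y hx hy
  | neg x _ hx => exact neg x hx

/-- The closed two-sided ideal of `A` generated by `p`, written `closure(ApA)` in the paper; it is
bundled as a left ideal because Mathlib provides closures of those. -/
def closedIdeal (p : A) : Ideal A :=
  (TwoSidedIdeal.asIdeal (TwoSidedIdeal.span {p})).closure

lemma self_mem_closedIdeal (p : A) : p ∈ closedIdeal p :=
  subset_closure (TwoSidedIdeal.subset_span (mem_singleton p))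

lemma mul_mem_closedIdeal_right (hy : y ∈ closedIdeal p) (x : A) : y * x ∈ closedIdeal p :=
  map_mem_closure (f := (· * x)) (by fun_prop) hy
    fun _ ha ↦ TwoSidedIdeal.mul_mem_right _ _ _ ha

lemma star_mem_closedIdeal (hp : IsSelfAdjoint p) (hy : y ∈ closedIdeal p) :
    star y ∈ closedIdeal p := by
  refine map_mem_closure (f := star) continuous_star hy fun a ha ↦ ?_
  refine span_singleton_induction (P := fun x ↦ star x ∈ TwoSidedIdeal.span {p}) ?_ ?_ ?_ ?_ ha
  · rw [star_zero]; exact TwoSidedIdeal.zero_mem _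
  · intro x y hx hy; rw [star_add]; exact TwoSidedIdeal.add_mem _ hx hy
  · intro x hx; rw [star_neg]; exact TwoSidedIdeal.neg_mem _ hx
  · intro a b
    rw [star_mul, star_mul, hp.star_eq, ← mul_assoc]
    exact TwoSidedIdeal.mul_mem_right _ _ _
      (TwoSidedIdeal.mul_mem_left _ _ _ (TwoSidedIdeal.subset_span (mem_singleton p)))

lemma smul_mem_closedIdeal (c : ℂ) (hy : y ∈ closedIdeal p) : c • y ∈ closedIdeal p := by
  simpa only [smul_mul_assoc, one_mul] using (closedIdeal p).mul_mem_left (c • (1 : A)) hy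

/-- The algebra `closure(ApA) + ℂ·1`, called `B` in the paper. -/
def idealUnitization (hp : IsSelfAdjoint p) : StarSubalgebra ℂ A where
  carrier := {x | ∃ y ∈ closedIdeal p, ∃ c : ℂ, x = y + c • (1 : A)}
  mul_mem' := by
    rintro _ _ ⟨y, hy, c, rfl⟩ ⟨z, hz, d, rfl⟩
    refine ⟨y * z + d • y + c • z, add_mem (add_mem (Ideal.mul_mem_left _ y hz)
      (smul_mem_closedIdeal d hy)) (smul_mem_closedIdeal c hz), c * d, ?_⟩
    simp only [mul_add, add_mul, smul_mul_assoc, mul_smul_comm, mul_one, one_mul]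
    module
  add_mem' := by
    rintro _ _ ⟨y, hy, c, rfl⟩ ⟨z, hz, d, rfl⟩
    exact ⟨y + z, add_mem hy hz, c + d, by module⟩
  algebraMap_mem' c := ⟨0, zero_mem _, c, by rw [Algebra.algebraMap_eq_smul_one, zero_add]⟩
  star_mem' := by
    rintro _ ⟨y, hy, c, rfl⟩
    exact ⟨star y, star_mem_closedIdeal hp hy, star c, by simp⟩

lemma mem_idealUnitization_iff (hp : IsSelfAdjoint p) :
    x ∈ idealUnitization hp ↔ ∃ y ∈ closedIdeal p, ∃ c : ℂ, x = y + c • (1 : A) :=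
  .rfl

lemma mem_idealUnitization_of_mem_closedIdeal (hp : IsSelfAdjoint p) (hy : y ∈ closedIdeal p) :
    y ∈ idealUnitization hp :=
  ⟨y, hy, 0, by rw [zero_smul, add_zero]⟩

lemma isClosed_idealUnitization (hp : IsSelfAdjoint p) :
    IsClosed (idealUnitization hp : Set A) := by
  convert ((closedIdeal p).restrictScalars ℂ).isClosed_sup_finiteDimensional
    (Submodule.span ℂ {(1 : A)}) isClosed_closure using 1
  ext x
  simp [mem_idealUnitization_iff, Submodule.mem_sup, Submodule.mem_span_singleton, eq_comm]

lemma RealRankZero.towerApproximable_of_mem_closedIdeal (h : RealRankZero A)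
    (hp : IsStarProjection p) (hy : y ∈ closedIdeal p) : TowerApproximable p y := by
  refine .of_mem_closure hp (closure_mono (fun x hx ↦ ?_) hy)
  refine span_singleton_induction (P := TowerApproximable p) ?_ (fun _ _ hx hy ↦ hx.add hp hy) ?_
    (h.towerApproximable_mul_mul hp) hx
  · simpa using h.towerApproximable_mul_mul hp 0 0
  · intro x hx e he ε hε
    simpa only [mul_neg, norm_neg] using hx e he ε hε

lemma RealRankZero.exists_tower_commute_norm_sub_le (h : RealRankZero A) (hp : IsStarProjection p)
    (hx : x ∈ idealUnitization hp.isSelfAdjoint) {ε : ℝ} (hε : 0 < ε) :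
    ∃ e v, IsTower p e ∧ v ∈ commutant e ∧ ‖v - x‖ ≤ ε := by
  obtain ⟨y, hy, c, rfl⟩ := hx
  obtain ⟨e₁, he₁, -, hy_norm⟩ :=
    h.towerApproximable_of_mem_closedIdeal hp hy p .base (ε / 2) (half_pos hε)
  obtain ⟨e, he, h_le, hy_norm'⟩ := h.towerApproximable_of_mem_closedIdeal hp
    (star_mem_closedIdeal hp.isSelfAdjoint hy) e₁ he₁ (ε / 2) (half_pos hε)
  have he_proj := he.isStarProjection hp
  have hee := he_proj.isIdempotentElem.eq
  refine ⟨e, e * y * e + c • 1, he, ?_, ?_⟩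
  · rw [mem_commutant_iff he_proj.isSelfAdjoint]
    simp only [mul_add, add_mul, mul_smul_comm, smul_mul_assoc, mul_one, one_mul, mul_assoc, hee]
    simp only [← mul_assoc, hee]
  · have h_left := norm_one_sub_mul_le_of_mul_eq he_proj h_le y
    have h_right : ‖e * (y * (1 - e))‖ ≤ ε / 2 := by
      refine (norm_mul_le_of_isStarProjection he_proj _).trans ?_
      rwa [← norm_star, star_mul, he_proj.one_sub.isSelfAdjoint.star_eq]
    have h_sub : y + c • 1 - (e * y * e + c • 1) = (1 - e) * y + e * (y * (1 - e)) := by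
      noncomm_ring
    rw [norm_sub_rev, h_sub]
    linarith [norm_add_le ((1 - e) * y) (e * (y * (1 - e)))]

end ClosedIdeal

section Homotopy

variable {e f p q r : A}

lemma mvnLE_unitary_conj_sub (g : unitary A) (hg : (g : A) ∈ commutant f) (hf : IsSelfAdjoint f)
    (h : MvNLE r (f - r)) : MvNLE (g * r * star (g : A)) (f - g * r * star (g : A)) := by
  have h_fix : (g : A) * f * star (g : A) = f := by
    rw [← (mem_commutant_iff hf).mp hg, mul_assoc, Unitary.mul_star_self_of_mem g.2, mul_one]
  have h_conj := h.conj g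
  rwa [mul_sub, sub_mul, h_fix] at h_conj

lemma star_mul_mem_commutant {g k : unitary A} (hr : IsSelfAdjoint r)
    (h : (g : A) * r * star (g : A) = k * r * star (k : A)) :
    star (g : A) * k ∈ commutant r := by
  rw [mem_commutant_iff hr]
  calc r * (star (g : A) * k) = star (g : A) * g * r * star (g : A) * k := by
        rw [Unitary.star_mul_self_of_mem g.2, one_mul, mul_assoc]
    _ = star (g : A) * (k * r * star (k : A)) * k := by rw [← h]; simp only [mul_assoc]
    _ = star (g : A) * k * r * (star (k : A) * k) := by simp only [mul_assoc]
    _ = star (g : A) * k * r := by rw [Unitary.star_mul_self_of_mem k.2, mul_one]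

-- Below `e + r`, the projections `r` and `u r u⋆` are conjugate by some `g` in the identity
-- component, so `g⋆ u` commutes with `r` and hence with `e`.
lemma RealRankZero.unitarilyIsotopic_of_mem_commutant (h : RealRankZero A)
    (h_sep : SeparativeCancellation A) (hp : IsStarProjection p) (he : IsTower p e)
    (u : unitary A) (hu : (u : A) ∈ commutant e) :
    UnitarilyIsotopic ⊤ p (u * p * star (u : A)) := by
  induction he generalizing u with
  | base =>
    rw [← (mem_commutant_iff hp.isSelfAdjoint).mp hu, mul_assoc, Unitary.mul_star_self_of_mem u.2,
      mul_one]
    exact .refl ⊤ p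
  | step e r he hr her hrp ih =>
    have he_proj := he.isStarProjection hp
    have hf := he_proj.add hr her
    have hfr : (e + r) * r = r := by rw [add_mul, her, hr.isIdempotentElem.eq, zero_add]
    have hre : MvNLE r (e + r - r) := by
      rw [add_sub_cancel_right]
      exact hrp.mono_right (he.mul_base hp)
    obtain ⟨g, hg, hg_comm, hgr⟩ := h.unitarilyIsotopic_of_mvnEquiv h_sep hf hr
      (isStarProjection_unitary_conj hr u) hfr (mul_unitary_conj_eq_self hf.isSelfAdjoint hfr hu)
      (mvnEquiv_unitary_conj hr u) hre (mvnLE_unitary_conj_sub u hu hf.isSelfAdjoint hre)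
    have h_comm_r := star_mul_mem_commutant hr.isSelfAdjoint hgr
    have h_comm_f := mul_mem (star_mem hg_comm) hu
    have h_comm_e : star (g : A) * u ∈ commutant e := by
      rw [mem_commutant_iff hr.isSelfAdjoint] at h_comm_r
      rw [mem_commutant_iff hf.isSelfAdjoint, add_mul, mul_add, h_comm_r] at h_comm_f
      exact (mem_commutant_iff he_proj.isSelfAdjoint).mpr (add_right_cancel h_comm_f)
    refine (ih (star g * u) h_comm_e).trans ⟨g, hg, trivial, ?_⟩
    have hgu : (g : A) * (star g * u : unitary A) = u := by
      rw [Submonoid.coe_mul, Unitary.coe_star, ← mul_assoc, Unitary.mul_star_self_of_mem g.2,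
        one_mul]
    calc (g : A) * ((star g * u : unitary A) * p * star ((star g * u : unitary A) : A)) *
          star (g : A)
        = (g * (star g * u : unitary A)) * p * star ((g : A) * (star g * u : unitary A)) := by
          simp only [star_mul, mul_assoc]
      _ = u * p * star (u : A) := by rw [hgu]

lemma exists_pos_conj_unitaryPart_norm_lt (p : A) (u : unitary A) {ε : ℝ} (hε : 0 < ε) :
    ∃ δ > 0, ∀ v : A, ‖v - u‖ < δ → IsUnit v ∧
      ‖unitaryPart v * p * star (unitaryPart v) - u * p * star (u : A)‖ < ε := by
  let F : Aˣ → A := fun g ↦ unitaryPart (g : A) * p * star (unitaryPart (g : A))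
  have hN : Continuous fun g : Aˣ ↦ unitaryPart (g : A) :=
    continuous_unitaryPart Units.continuous_val Units.isUnit
  have hF : Continuous F := by fun_prop
  have hFu : F (Unitary.toUnits u) = u * p * star (u : A) := by
    simp only [F, Unitary.val_toUnits_apply, unitaryPart_of_mem_unitary u.2]
  have h_nhds : Units.val '' (F ⁻¹' Metric.ball (F (Unitary.toUnits u)) ε) ∈ 𝓝 (u : A) :=
    Units.isOpenEmbedding_val.isOpenMap.image_mem_nhds
      ((hF.continuousAt (x := Unitary.toUnits u)).preimage_mem_nhds (Metric.ball_mem_nhds _ hε))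
  obtain ⟨δ, hδ, h_sub⟩ := Metric.mem_nhds_iff.mp h_nhds
  refine ⟨δ, hδ, fun v hv ↦ ?_⟩
  obtain ⟨g, hg, rfl⟩ := h_sub (mem_ball_iff_norm.mpr hv)
  exact ⟨g.isUnit, by rwa [← hFu, ← mem_ball_iff_norm]⟩

lemma RealRankZero.unitarilyIsotopic_of_mem_idealUnitization (h : RealRankZero A)
    (h_sep : SeparativeCancellation A) (hp : IsStarProjection p) (u : unitary A)
    (hu : (u : A) ∈ idealUnitization hp.isSelfAdjoint) :
    UnitarilyIsotopic ⊤ p (u * p * star (u : A)) := by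
  obtain ⟨δ, hδ, h_conj⟩ := exists_pos_conj_unitaryPart_norm_lt p u (ε := 1 / 4) (by norm_num)
  obtain ⟨e, v, he, hv, hv_norm⟩ := h.exists_tower_commute_norm_sub_le hp hu (half_pos hδ)
  obtain ⟨hv_unit, h_near⟩ := h_conj v (hv_norm.trans_lt (half_lt_self hδ))
  let w : unitary A := ⟨unitaryPart v, unitaryPart_mem_unitary hv_unit⟩
  have h_tower : UnitarilyIsotopic ⊤ p (w * p * star (w : A)) :=
    h.unitarilyIsotopic_of_mem_commutant h_sep hp he w (unitaryPart_mem (isClosed_commutant e) hv)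
  exact h_tower.trans (unitarilyIsotopic_of_norm_sub_lt (S := ⊤) isClosed_univ
    (isStarProjection_unitary_conj hp u) (isStarProjection_unitary_conj hp w) trivial trivial
    h_near).symm

lemma UnitarilyIsotopic.exists_path (hp : IsStarProjection p) {S : StarSubalgebra ℂ A}
    (h : UnitarilyIsotopic S p q) :
    ∃ P : C(I, A), (∀ t, IsStarProjection (P t)) ∧ P 0 = p ∧ P 1 = q := by
  obtain ⟨g, ⟨γ⟩, -, rfl⟩ := h
  exact ⟨⟨fun t ↦ (γ t : A) * p * star (γ t : A), by fun_prop⟩,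
    fun t ↦ isStarProjection_unitary_conj hp (γ t), by simp, by simp⟩

lemma UnitarilyIsotopic.mem_closedIdeal {S : StarSubalgebra ℂ A}
    (h : UnitarilyIsotopic S p q) : q ∈ closedIdeal p := by
  obtain ⟨g, -, -, rfl⟩ := h
  exact mul_mem_closedIdeal_right (Ideal.mul_mem_left _ _ (self_mem_closedIdeal p)) _

end Homotopy

section Matrix

lemma MvNEquiv.fromBlocks_diagonal {a b a' b' : A}
    (h : MvNEquiv (blockSum a b) (blockSum a' b')) :
    MvNEquiv
      (Matrix.fromBlocks (Matrix.diagonal fun _ : Fin 1 ↦ a) 0 0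
        (Matrix.diagonal fun _ : Fin 1 ↦ b))
      (Matrix.fromBlocks (Matrix.diagonal fun _ : Fin 1 ↦ a') 0 0
        (Matrix.diagonal fun _ : Fin 1 ↦ b')) := by
  let e : Fin 1 ⊕ Fin 1 ≃ Fin 2 := finSumFinEquiv
  have h_blocks (a b : A) : Matrix.fromBlocks (Matrix.diagonal fun _ : Fin 1 ↦ a) 0 0
      (Matrix.diagonal fun _ : Fin 1 ↦ b) = (blockSum a b).submatrix e e := by
    ext i j
    rcases i with i | i <;> rcases j with j | j <;> fin_cases i <;> fin_cases j <;> rfl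
  obtain ⟨v, hv, hv'⟩ := h
  refine ⟨v.submatrix e e, ?_, ?_⟩
  · rw [h_blocks, ← hv, ← Matrix.submatrix_mul_equiv _ _ _ e]
    rfl
  · rw [h_blocks, ← hv', ← Matrix.submatrix_mul_equiv _ _ _ e]
    rfl

lemma MvNEquiv.of_diagonal {a b : A}
    (h : MvNEquiv (Matrix.diagonal fun _ : Fin 1 ↦ a) (Matrix.diagonal fun _ : Fin 1 ↦ b)) :
    MvNEquiv a b := by
  obtain ⟨v, hv, hv'⟩ := h
  refine ⟨v 0 0, ?_, ?_⟩
  · simpa [Matrix.mul_apply, Matrix.star_apply] using congrFun (congrFun hv 0) 0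
  · simpa [Matrix.mul_apply, Matrix.star_apply] using congrFun (congrFun hv' 0) 0

lemma SeparativeCancellation.of_matrix (h_sep : ∀ p q : Matrix (Fin 1) (Fin 1) A,
      IsIdempotentElem p → IsSelfAdjoint p → IsIdempotentElem q → IsSelfAdjoint q →
      MvNEquiv (Matrix.fromBlocks p 0 0 p) (Matrix.fromBlocks p 0 0 q) →
      MvNEquiv (Matrix.fromBlocks p 0 0 q) (Matrix.fromBlocks q 0 0 q) → MvNEquiv p q) :
    SeparativeCancellation A := by
  have h_idem {a : A} (ha : IsStarProjection a) :
      IsIdempotentElem (Matrix.diagonal fun _ : Fin 1 ↦ a) := by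
    rw [IsIdempotentElem, Matrix.diagonal_mul_diagonal, ha.isIdempotentElem.eq]
  have h_sa {a : A} (ha : IsStarProjection a) :
      IsSelfAdjoint (Matrix.diagonal fun _ : Fin 1 ↦ a) :=
    Matrix.isHermitian_diagonal_of_self_adjoint _ (funext fun _ ↦ ha.isSelfAdjoint)
  intro p q hp hq h h'
  exact (h_sep _ _ (h_idem hp) (h_sa hp) (h_idem hq) (h_sa hq) h.fromBlocks_diagonal
    h'.fromBlocks_diagonal).of_diagonal

end Matrix

theorem stmt18_general (h : RealRankZero A) (h_sep : SeparativeCancellation A) {p : A}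
    (hp : IsStarProjection p) (q : A) :
    (∃ P : C(I, A), (∀ t, IsStarProjection (P t)) ∧ P 0 = p ∧ P 1 = q) ↔
      q ∈ idealUnitization hp.isSelfAdjoint ∧
        ∃ u ∈ idealUnitization hp.isSelfAdjoint, u * star u = 1 ∧ star u * u = 1 ∧
          u * p * star u = q := by
  constructor
  · rintro ⟨P, hP, hP₀, rfl⟩
    have h_mem (t : I) : P t ∈ idealUnitization hp.isSelfAdjoint := by
      have h_isotopic : UnitarilyIsotopic ⊤ (P 0) (P t) :=
        unitarilyIsotopic_of_continuous (S := ⊤) isClosed_univ P.continuous hP (fun _ ↦ trivial) 0 t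
      rw [hP₀] at h_isotopic
      exact mem_idealUnitization_of_mem_closedIdeal _ h_isotopic.mem_closedIdeal
    obtain ⟨u, -, hu, h_conj⟩ := unitarilyIsotopic_of_continuous
      (isClosed_idealUnitization hp.isSelfAdjoint) P.continuous hP h_mem 0 1
    exact ⟨h_mem 1, u, hu, Unitary.mul_star_self_of_mem u.2, Unitary.star_mul_self_of_mem u.2,
      hP₀ ▸ h_conj⟩
  · rintro ⟨-, u, hu, huu, huu', rfl⟩
    exact (h.unitarilyIsotopic_of_mem_idealUnitization h_sep hp
      ⟨u, Unitary.mem_iff.mpr ⟨huu', huu⟩⟩ hu).exists_path hp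

end ProjectionHomotopy

/-- `A` is a unital C*-algebra.  Real rank zero: the invertible
self-adjoint elements are dense in the self-adjoint elements.  Separativity: for all
`n` and projections `p`, `q` in `Mₙ(A)`, `p⊕p ~ p⊕q ~ q⊕q` implies `p ~ q`, where `~`
is Murray–von Neumann equivalence (`p = v*v`, `q = vv*`) and `p⊕q` is the block sum.
`B = closure(ApA) + ℂ·1`, where `closure(ApA)` is the closure of the two-sided ideal
generated by `p`.  Homotopy of projections is a continuous path of projections in `A`,
and unitary equivalence in `B` requires the implementing unitary to lie in `B`. -/
theorem stmt18 (A : Type u) [NormedRing A] [StarRing A] [CStarRing A]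
    [NormedAlgebra ℂ A] [CompleteSpace A] [StarModule ℂ A]
    (hrr0 : ∀ x : A, IsSelfAdjoint x → x ∈ closure {y : A | IsSelfAdjoint y ∧ IsUnit y})
    (hsep : ∀ (n : ℕ) (p q : Matrix (Fin n) (Fin n) A),
      IsIdempotentElem p → IsSelfAdjoint p → IsIdempotentElem q → IsSelfAdjoint q →
      (∃ v : Matrix (Fin n ⊕ Fin n) (Fin n ⊕ Fin n) A,
        star v * v = Matrix.fromBlocks p 0 0 p ∧
        v * star v = Matrix.fromBlocks p 0 0 q) →
      (∃ v : Matrix (Fin n ⊕ Fin n) (Fin n ⊕ Fin n) A,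
        star v * v = Matrix.fromBlocks p 0 0 q ∧
        v * star v = Matrix.fromBlocks q 0 0 q) →
      (∃ v : Matrix (Fin n) (Fin n) A, star v * v = p ∧ v * star v = q))
    (p q : A) (hp₁ : IsIdempotentElem p) (hp₂ : IsSelfAdjoint p)
    (hq₁ : IsIdempotentElem q) (hq₂ : IsSelfAdjoint q)
    (B : Set A)
    (hB : B = {x : A | ∃ y ∈ closure ((TwoSidedIdeal.span {p} : TwoSidedIdeal A) : Set A),
                 ∃ c : ℂ, x = y + c • (1 : A)}) :
    (∃ f : C(unitInterval, A),
        (∀ t, IsIdempotentElem (f t) ∧ IsSelfAdjoint (f t)) ∧ f 0 = p ∧ f 1 = q)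
    ↔ (q ∈ B ∧ ∃ u : A, u ∈ B ∧ u * star u = 1 ∧ star u * u = 1 ∧ u * p * star u = q) := by
  let _ : CStarAlgebra A := {}
  subst hB
  simp only [← isStarProjection_iff]
  exact ProjectionHomotopy.stmt18_general hrr0 (.of_matrix (hsep 1)) ⟨hp₁, hp₂⟩ q
end
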